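/- Let H > 0 and let f : ℝ → ℝ be of class C² with f(0) = 0, F(s) = ∫₀ˢ f(σ) dσ ≥ 0 for all s ∈ ℝ, and suppose there exist δ, M > 0 such that |f'(s)| ≤ M·s² for all s ∈ (−δ, δ). Let g, h ∈ C_0^∞(ℝ³) be radial. Then there exists ε > 0 such that the Cauchy problem ∂ₜ²φ + 3H ∂ₜφ − e^{−2Ht} Δφ + f(φ) = 0 on [0,∞)×ℝ³ with initial data (φ, ∂ₜφ)|_{t=0} = (ε·g, ε·h) has a global-in-time C² solution φ : [0,∞)×ℝ³ → ℝ, which moreover is radial in x and has, for each time t, compact support in the space variable. -/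

import Mathlib

open MeasureTheory Filter

noncomputable section

/-- Euclidean space `ℝ³`. -/
abbrev E3 : Type := EuclideanSpace ℝ (Fin 3)

/-- The Laplacian of a function on `ℝ³`, as the sum of second partial derivatives. -/
def lap (u : E3 → ℝ) (x : E3) : ℝ :=
  ∑ i : Fin 3,
    fderiv ℝ (fun y => fderiv ℝ u y (EuclideanSpace.single i 1)) x (EuclideanSpace.single i 1)

/-- First time derivative `∂ₜφ`. -/
def dt1 (φ : ℝ → E3 → ℝ) (t : ℝ) (x : E3) : ℝ := deriv (fun s => φ s x) t

/-- Second time derivative `∂ₜ²φ`. -/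
def dt2 (φ : ℝ → E3 → ℝ) (t : ℝ) (x : E3) : ℝ := deriv (fun s => dt1 φ s x) t

/-- The potential `F(s) = ∫₀ˢ f(σ) dσ`. -/
def pot (f : ℝ → ℝ) (s : ℝ) : ℝ := ∫ σ in (0:ℝ)..s, f σ

open Set Metric Topology ProbabilityTheory
open scoped RealInnerProductSpace

/-!
In conformal time the Klein–Gordon operator of mass `2H²` on de Sitter space becomes the flat wave
operator, so `∂ₜ²φ + 3H ∂ₜφ + 2H²φ - e^{-2Ht} Δφ = S` is solved by a Duhamel integral of Kirchhoff
spherical means. Moving `2H²φ - f(φ)` to the right-hand side turns the Cauchy problem into a fixed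
point equation, which is a contraction in the weight `e^{Ht/4}` when `|f'| ≤ H²/2`. Since
`f'(0) = 0`, this bound can be enforced by modifying `f` away from `0`. The linearized equations
show that `Δφ` grows at most like `e^{Ht/2}`, so `t ↦ φ(t, x)` solves the damped equation
`y'' + 3Hy' + f(y) = p` with the small forcing `p = e^{-2Ht} Δφ = O(e^{-3Ht/2})`. If the potential
is positive somewhere on a given side of `0`, the decay of energy confines `y` on that side; if it
vanishes identically there, friction stops `y`. Hence small solutions never leave the region where
`f` is unmodified.
-/

/-! ### Differentiation under the integral sign -/

section ParametricIntegral

variable {F : Type*} [NormedAddCommGroup F]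

section CompactSupport

variable {X : Type*} [TopologicalSpace X] [MeasurableSpace X] [OpensMeasurableSpace X]
  [SecondCountableTopologyEither X F] {μ : Measure X} [IsFiniteMeasure μ] {K : Set X}

lemma integrable_of_continuous_of_ae_mem_isCompact (hK : IsCompact K) (hμK : ∀ᵐ x ∂μ, x ∈ K)
    {T : X → F} (hT : Continuous T) : Integrable T μ := by
  obtain ⟨C, hC⟩ := hK.exists_bound_of_continuousOn hT.continuousOn
  exact Integrable.of_bound hT.aestronglyMeasurable C (hμK.mono hC)

theorem hasFDerivAt_integral_of_continuous [NormedSpace ℝ F] {P : Type*} [NormedAddCommGroup P]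
    [NormedSpace ℝ P] [ProperSpace P] [SecondCountableTopologyEither X (P →L[ℝ] F)]
    (hK : IsCompact K) (hμK : ∀ᵐ x ∂μ, x ∈ K) {Q : P → X → F} {Q' : P → X → P →L[ℝ] F}
    (hQ : Continuous ↿Q) (hQ' : Continuous ↿Q')
    (h : ∀ p x, HasFDerivAt (fun p => Q p x) (Q' p x) p) (p : P) :
    HasFDerivAt (fun p => ∫ x, Q p x ∂μ) (∫ x, Q' p x ∂μ) p := by
  obtain ⟨C, hC⟩ := ((isCompact_closedBall p 1).prod hK).exists_bound_of_continuousOn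
    hQ'.continuousOn
  refine hasFDerivAt_integral_of_dominated_of_fderiv_le (bound := fun _ => C)
    (closedBall_mem_nhds p one_pos) ?_
    (integrable_of_continuous_of_ae_mem_isCompact hK hμK (by fun_prop)) ?_ ?_ (by simp)
    (.of_forall fun x q _ => h q x)
  · exact .of_forall fun q => Continuous.aestronglyMeasurable (by fun_prop)
  · exact Continuous.aestronglyMeasurable (by fun_prop)
  · filter_upwards [hμK] with x hx q hq
    exact hC (q, x) ⟨hq, hx⟩

end CompactSupport

variable [NormedSpace ℝ F]

lemma continuous_of_hasFDerivAt {E : Type*} [NormedAddCommGroup E] [NormedSpace ℝ E] {u : E → F}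
    {u' : E → E →L[ℝ] F} (hu : ∀ y, HasFDerivAt u (u' y) y) : Continuous u :=
  continuous_iff_continuousAt.2 fun y => (hu y).continuousAt

lemma continuous_toSpanSingleton :
    Continuous (ContinuousLinearMap.toSpanSingleton ℝ : F → ℝ →L[ℝ] F) :=
  (ContinuousLinearMap.toSpanSingletonCLE (𝕜 := ℝ) (E := F)).continuous

theorem hasFDerivAt_intervalIntegral_of_continuous {P : Type*} [NormedAddCommGroup P]
    [NormedSpace ℝ P] [ProperSpace P] {Q : P → ℝ → F} {Q' : P → ℝ → P →L[ℝ] F}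
    (hQ : Continuous ↿Q) (hQ' : Continuous ↿Q')
    (h : ∀ p s, HasFDerivAt (fun p => Q p s) (Q' p s) p) (a b : ℝ) (p : P) :
    HasFDerivAt (fun p => ∫ s in a..b, Q p s) (∫ s in a..b, Q' p s) p := by
  have integral_Ioc (a b : ℝ) :
      HasFDerivAt (fun p => ∫ s in Ioc a b, Q p s) (∫ s in Ioc a b, Q' p s) p :=
    hasFDerivAt_integral_of_continuous isCompact_Icc
      ((ae_restrict_mem measurableSet_Ioc).mono fun _ => (Ioc_subset_Icc_self ·)) hQ hQ' h p
  exact (integral_Ioc a b).sub (integral_Ioc b a)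

theorem hasDerivAt_intervalIntegral_diagonal [CompleteSpace F] {Q Q' : ℝ → ℝ → F}
    (hQ : Continuous ↿Q) (hQ' : Continuous ↿Q')
    (h : ∀ t s, HasDerivAt (fun t => Q t s) (Q' t s) t) (a t : ℝ) :
    HasDerivAt (fun t => ∫ s in a..t, Q t s) (Q t t + ∫ s in a..t, Q' t s) t := by
  have hQ'L : Continuous fun p : ℝ × ℝ => ContinuousLinearMap.toSpanSingleton ℝ (Q' p.1 p.2) :=
    continuous_toSpanSingleton.comp hQ'
  have two_variables := hasStrictFDerivAt_uncurry_coprod (𝕜 := ℝ) (u := (t, t))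
    (f := fun b t => ∫ s in a..b, Q t s)
    (f₁ := fun b t => ContinuousLinearMap.toSpanSingleton ℝ (Q t b))
    (f₂ := fun b t => ∫ s in a..b, ContinuousLinearMap.toSpanSingleton ℝ (Q' t s))
    (.of_forall fun v => (intervalIntegral.integral_hasDerivAt_right
      (Continuous.intervalIntegrable (by fun_prop) _ _)
      (Continuous.stronglyMeasurableAtFilter (by fun_prop) _ _)
      (Continuous.continuousAt (by fun_prop))).hasFDerivAt)
    (.of_forall fun v => hasFDerivAt_intervalIntegral_of_continuous hQ hQ'L
      (fun t s => (h t s).hasFDerivAt) _ _ _)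
    (continuous_toSpanSingleton.comp (hQ.comp continuous_swap)).continuousAt
    (intervalIntegral.continuous_parametric_intervalIntegral_of_continuous (X := ℝ × ℝ)
      (f := fun p s => ContinuousLinearMap.toSpanSingleton ℝ (Q' p.2 s))
      (hQ'L.comp ((continuous_snd.comp continuous_fst).prodMk continuous_snd))
      continuous_fst).continuousAt
  have diagonal : HasFDerivAt (fun t : ℝ => (t, t)) _ t :=
    (hasFDerivAt_id (𝕜 := ℝ) t).prodMk (hasFDerivAt_id (𝕜 := ℝ) t)
  refine (HasFDerivAt.comp (f := fun t : ℝ => (t, t)) t two_variables.hasFDerivAt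
    diagonal).hasDerivAt.congr_deriv ?_
  have hQ'L_t := (hQ'L.comp (Continuous.prodMk_right t)).intervalIntegrable (μ := volume) a t
  simpa [Function.HasUncurry.uncurry] using
    ContinuousLinearMap.intervalIntegral_apply hQ'L_t (1 : ℝ)

end ParametricIntegral

/-! ### Functions of time and space -/

section TimeSpace

variable {E F : Type*} [NormedAddCommGroup E] [NormedSpace ℝ E] [NormedAddCommGroup F]
  [NormedSpace ℝ F] {φ φt : ℝ → E → F} {φx : ℝ → E → E →L[ℝ] F}

lemma hasFDerivAt_of_continuous_partials
    (ht : ∀ t x, HasDerivAt (fun t => φ t x) (φt t x) t)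
    (hx : ∀ t x, HasFDerivAt (φ t) (φx t x) x)
    (htc : Continuous ↿φt) (hxc : Continuous ↿φx) (p : ℝ × E) :
    HasFDerivAt (Function.uncurry φ)
      ((ContinuousLinearMap.toSpanSingleton ℝ (φt p.1 p.2)).coprod (φx p.1 p.2)) p :=
  (hasStrictFDerivAt_uncurry_coprod (𝕜 := ℝ) (u := p) (f := φ)
    (f₁ := fun t x => ContinuousLinearMap.toSpanSingleton ℝ (φt t x)) (f₂ := φx)
    (.of_forall fun _ => (ht _ _).hasFDerivAt) (.of_forall fun _ => hx _ _)
    (continuous_toSpanSingleton.comp htc).continuousAt hxc.continuousAt).hasFDerivAt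

theorem contDiff_succ_of_partials {n : ℕ}
    (ht : ∀ t x, HasDerivAt (fun t => φ t x) (φt t x) t)
    (hx : ∀ t x, HasFDerivAt (φ t) (φx t x) x)
    (htc : ContDiff ℝ n (Function.uncurry φt)) (hxc : ContDiff ℝ n (Function.uncurry φx)) :
    ContDiff ℝ (n + 1) (Function.uncurry φ) := by
  refine (contDiff_succ_iff_hasFDerivAt (n := n)).2
    ⟨_, ?_, hasFDerivAt_of_continuous_partials ht hx htc.continuous hxc.continuous⟩
  exact (ContinuousLinearMap.coprodEquivL ℝ).contDiff.comp
    (((ContinuousLinearMap.toSpanSingletonCLE (𝕜 := ℝ) (E := F)).contDiff.comp htc).prodMk hxc)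

end TimeSpace

/-! ### Infinitesimal rotations -/

section Rotations

variable {E : Type*} [NormedAddCommGroup E] [InnerProductSpace ℝ E]

lemma exists_rotation_of_mem_skewAdjoint [CompleteSpace E] {J : E →L[ℝ] E}
    (hJ : J ∈ skewAdjoint (E →L[ℝ] E)) :
    ∃ R : ℝ → E →L[ℝ] E, R 0 = 1 ∧ (∀ θ, R θ ∈ unitary (E →L[ℝ] E)) ∧
      ∀ θ, HasDerivAt R (R θ * J) θ := by
  let : NormedAlgebra ℚ (E →L[ℝ] E) := .restrictScalars ℚ ℝ (E →L[ℝ] E)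
  exact ⟨fun θ => NormedSpace.exp (θ • J), by simp, fun θ =>
    NormedSpace.exp_mem_unitary_of_mem_skewAdjoint (skewAdjoint.smul_mem θ hJ),
    hasDerivAt_exp_smul_const (𝕂 := ℝ) J⟩

/-- The infinitesimal rotation `ω ↦ ⟪a, ω⟫ b - ⟪b, ω⟫ a` in the plane spanned by `a` and `b`. -/
def planeRotation (a b : E) : E →L[ℝ] E :=
  (innerSL ℝ a).smulRight b - (innerSL ℝ b).smulRight a

lemma planeRotation_apply (a b ω : E) : planeRotation a b ω = ⟪a, ω⟫ • b - ⟪b, ω⟫ • a := rfl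

lemma planeRotation_mem_skewAdjoint [CompleteSpace E] (a b : E) :
    planeRotation a b ∈ skewAdjoint (E →L[ℝ] E) := by
  rw [skewAdjoint.mem_iff, ContinuousLinearMap.star_eq_adjoint, eq_comm,
    ContinuousLinearMap.eq_adjoint_iff]
  intro x y
  simp only [neg_apply, planeRotation_apply, inner_neg_left, inner_sub_left,
    inner_sub_right, real_inner_smul_right, real_inner_comm]
  ring

variable {ι : Type*} [Fintype ι] (b : OrthonormalBasis ι ℝ E)

lemma sum_planeRotation_planeRotation (ω : E) :
    ∑ i, ∑ j, planeRotation (b i) (b j) (planeRotation (b i) (b j) ω) =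
      (-2 * (Fintype.card ι - 1) : ℝ) • ω := by
  classical
  have expand (i j : ι) : planeRotation (b i) (b j) (planeRotation (b i) (b j) ω) =
      (if i = j then ⟪b i, ω⟫ • b j else 0) - ⟪b j, ω⟫ • b j - ⟪b i, ω⟫ • b i +
        (if i = j then ⟪b j, ω⟫ • b i else 0) := by
    rcases eq_or_ne i j with rfl | hij
    · simp [planeRotation_apply]
    · simp [planeRotation_apply, inner_sub_right, real_inner_smul_right, hij, hij.symm]
  simp only [expand, Finset.sum_add_distrib, Finset.sum_sub_distrib, Finset.sum_ite_eq,
    Finset.mem_univ, if_true, b.sum_repr', Finset.sum_const, Finset.card_univ, ← Finset.smul_sum]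
  module

lemma sum_bilinear_planeRotation {F : Type*} [NormedAddCommGroup F] [NormedSpace ℝ F]
    (B : E →L[ℝ] E →L[ℝ] F) {ω : E} (hω : ‖ω‖ = 1) :
    ∑ i, ∑ j, B (planeRotation (b i) (b j) ω) (planeRotation (b i) (b j) ω) =
      (2 : ℝ) • (∑ i, B (b i) (b i) - B ω ω) := by
  have expand (i j : ι) : B (planeRotation (b i) (b j) ω) (planeRotation (b i) (b j) ω) =
      ⟪b i, ω⟫ ^ 2 • B (b j) (b j) + ⟪b j, ω⟫ ^ 2 • B (b i) (b i)
        - (B (⟪b i, ω⟫ • b i) (⟪b j, ω⟫ • b j) + B (⟪b j, ω⟫ • b j) (⟪b i, ω⟫ • b i)) := by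
    simp only [planeRotation_apply, map_sub, map_smul, sub_apply, smul_apply]
    module
  have sum_sq : ∑ i, ⟪b i, ω⟫ ^ 2 = 1 := by
    simp [b.sum_sq_inner_right, hω]
  have sum_B : ∑ i, ∑ j, B (⟪b i, ω⟫ • b i) (⟪b j, ω⟫ • b j) = B ω ω := by
    simp only [← map_sum, b.sum_repr', ← sum_apply]
  simp only [expand, Finset.sum_add_distrib, Finset.sum_sub_distrib, ← Finset.smul_sum,
    ← Finset.sum_smul, sum_sq]
  rw [Finset.sum_comm (f := fun i j => B (⟪b j, ω⟫ • b j) (⟪b i, ω⟫ • b i)), sum_B]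
  module

end Rotations

/-! ### The uniform measure on the unit sphere -/

section UnitSphere

variable {E : Type*} [NormedAddCommGroup E] [InnerProductSpace ℝ E] [FiniteDimensional ℝ E]
  [MeasurableSpace E] [BorelSpace E]

variable (E) in
/-- The rotation-invariant probability measure on the unit sphere, as a measure on the ambient
space: the radial projection of the uniform measure on the unit ball. -/
def unitSphereMeasure : Measure E :=
  (volume[|ball (0 : E) 1]).map fun x => ‖x‖⁻¹ • x

instance : IsProbabilityMeasure (unitSphereMeasure E) :=
  have : IsProbabilityMeasure (volume[|ball (0 : E) 1]) :=
    cond_isProbabilityMeasure_of_finite (measure_ball_pos _ _ one_pos).ne' measure_ball_lt_top.ne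
  Measure.isProbabilityMeasure_map (by fun_prop)

lemma ae_norm_eq_one_unitSphereMeasure [Nontrivial E] :
    ∀ᵐ ω ∂unitSphereMeasure E, ‖ω‖ = 1 := by
  refine (ae_map_iff (by fun_prop) (isClosed_singleton.preimage continuous_norm).measurableSet).2 ?_
  have ne_zero : ∀ᵐ x ∂volume[|ball (0 : E) 1], x ≠ 0 :=
    Measure.ae_smul_measure (ae_restrict_of_ae (Measure.ae_ne volume 0)) _
  filter_upwards [ne_zero] with x hx
  simp [norm_smul, hx]

lemma measurePreserving_unitSphereMeasure (e : E ≃ₗᵢ[ℝ] E) :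
    MeasurePreserving e (unitSphereMeasure E) (unitSphereMeasure E) := by
  have on_ball : (volume[|ball (0 : E) 1]).map e = volume[|ball (0 : E) 1] := by
    have := e.measurePreserving.restrict_preimage (s := ball (0 : E) 1) isOpen_ball.measurableSet
    rw [e.preimage_ball, map_zero] at this
    rw [ProbabilityTheory.cond, Measure.map_smul, this.map_eq]
  have e_meas : Measurable e := e.continuous.measurable
  refine ⟨e_meas, ?_⟩
  nth_rw 2 [unitSphereMeasure]
  rw [← on_ball, unitSphereMeasure, Measure.map_map e_meas (by fun_prop),
    Measure.map_map (by fun_prop) e_meas]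
  congr 1
  ext x
  simp

variable {F : Type*} [NormedAddCommGroup F]

section Nontrivial

variable [Nontrivial E]

lemma ae_mem_sphere_unitSphereMeasure : ∀ᵐ ω ∂unitSphereMeasure E, ω ∈ sphere (0 : E) 1 :=
  ae_norm_eq_one_unitSphereMeasure.mono fun _ => mem_sphere_zero_iff_norm.2

lemma integrable_unitSphereMeasure {T : E → F} (hT : Continuous T) :
    Integrable T (unitSphereMeasure E) :=
  integrable_of_continuous_of_ae_mem_isCompact (isCompact_sphere 0 1)
    ae_mem_sphere_unitSphereMeasure hT

variable [NormedSpace ℝ F]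

lemma continuous_integral_unitSphereMeasure {X : Type*} [TopologicalSpace X]
    [FirstCountableTopology X] [LocallyCompactSpace X] {T : X → E → F} (hT : Continuous ↿T) :
    Continuous fun x => ∫ ω, T x ω ∂unitSphereMeasure E := by
  have := continuous_parametric_integral_of_continuous (μ := unitSphereMeasure E) hT
    (isCompact_sphere (0 : E) 1)
  rwa [Measure.restrict_eq_self_of_ae_mem ae_mem_sphere_unitSphereMeasure] at this

lemma norm_integral_unitSphereMeasure_le {T : E → F} {c : ℝ} (h : ∀ ω, ‖ω‖ = 1 → ‖T ω‖ ≤ c) :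
    ‖∫ ω, T ω ∂unitSphereMeasure E‖ ≤ c := by
  simpa using norm_integral_le_of_norm_le_const (μ := unitSphereMeasure E)
    (ae_norm_eq_one_unitSphereMeasure.mono h)

lemma hasFDerivAt_integral_unitSphereMeasure {P : Type*} [NormedAddCommGroup P] [NormedSpace ℝ P]
    [ProperSpace P] {Q : P → E → F} {Q' : P → E → P →L[ℝ] F} (hQ : Continuous ↿Q)
    (hQ' : Continuous ↿Q') (h : ∀ p ω, HasFDerivAt (fun p => Q p ω) (Q' p ω) p) (p : P) :
    HasFDerivAt (fun p => ∫ ω, Q p ω ∂unitSphereMeasure E)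
      (∫ ω, Q' p ω ∂unitSphereMeasure E) p :=
  hasFDerivAt_integral_of_continuous (isCompact_sphere 0 1) ae_mem_sphere_unitSphereMeasure
    hQ hQ' h p

lemma hasDerivAt_integral_unitSphereMeasure {Q Q' : ℝ → E → F}
    (hQ : Continuous ↿Q) (hQ' : Continuous ↿Q')
    (h : ∀ p ω, HasDerivAt (fun p => Q p ω) (Q' p ω) p) (p : ℝ) :
    HasDerivAt (fun p => ∫ ω, Q p ω ∂unitSphereMeasure E)
      (∫ ω, Q' p ω ∂unitSphereMeasure E) p := by
  have hQ'L : Continuous fun z : ℝ × E => ContinuousLinearMap.toSpanSingleton ℝ (Q' z.1 z.2) :=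
    continuous_toSpanSingleton.comp hQ'
  refine (hasFDerivAt_integral_unitSphereMeasure hQ hQ'L
    (fun p ω => (h p ω).hasFDerivAt) p).hasDerivAt.congr_deriv ?_
  have hQ'L_p := integrable_unitSphereMeasure (hQ'L.comp (Continuous.prodMk_right p))
  simpa using ContinuousLinearMap.integral_apply hQ'L_p (1 : ℝ)

end Nontrivial

variable [NormedSpace ℝ F]

lemma integral_unitSphereMeasure_comp (e : E ≃ₗᵢ[ℝ] E) (T : E → F) :
    ∫ ω, T (e ω) ∂unitSphereMeasure E = ∫ ω, T ω ∂unitSphereMeasure E :=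
  (measurePreserving_unitSphereMeasure e).integral_comp e.toHomeomorph.measurableEmbedding T

/-! ### Rotational derivatives and the Darboux identity -/

variable [Nontrivial E]

theorem integral_fderiv_skewAdjoint_unitSphereMeasure {J : E →L[ℝ] E}
    (hJ : J ∈ skewAdjoint (E →L[ℝ] E)) {v : E → F} {v' : E → E →L[ℝ] F}
    (hv : ∀ y, HasFDerivAt v (v' y) y) (hv' : Continuous v') :
    ∫ ω, v' ω (J ω) ∂unitSphereMeasure E = 0 := by
  obtain ⟨R, hR0, R_unitary, hR⟩ := exists_rotation_of_mem_skewAdjoint hJ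
  have hvc : Continuous v := continuous_of_hasFDerivAt hv
  have hRc : Continuous R := continuous_iff_continuousAt.2 fun θ => (hR θ).continuousAt
  have along_rotation := hasDerivAt_integral_unitSphereMeasure
    (Q := fun θ ω => v (R θ ω))
    (Q' := fun θ ω => v' (R θ ω) ((R θ * J) ω))
    (by fun_prop) (by fun_prop) (fun θ ω => (hv _).comp_hasDerivAt θ
      ((ContinuousLinearMap.apply ℝ E ω).hasFDerivAt.comp_hasDerivAt θ (hR θ))) 0
  have constant : (fun θ => ∫ ω, v (R θ ω) ∂unitSphereMeasure E) =
      fun _ => ∫ ω, v ω ∂unitSphereMeasure E :=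
    funext fun θ =>
      integral_unitSphereMeasure_comp (Unitary.linearIsometryEquiv ⟨R θ, R_unitary θ⟩) v
  rw [constant] at along_rotation
  simpa [hR0] using along_rotation.unique (hasDerivAt_const _ _)

lemma integral_planeRotation_unitSphereMeasure
    {u' : E → E →L[ℝ] F} {u'' : E → E →L[ℝ] E →L[ℝ] F}
    (hu' : ∀ y, HasFDerivAt u' (u'' y) y) (hu'' : Continuous u'') (k : ℝ) (x a b : E) :
    ∫ ω, (k • u'' (x + k • ω) (planeRotation a b ω) (planeRotation a b ω) +
      u' (x + k • ω) (planeRotation a b (planeRotation a b ω))) ∂unitSphereMeasure E = 0 := by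
  have hu'c : Continuous u' := continuous_of_hasFDerivAt hu'
  have flip_cont : Continuous fun ω => (u'' (x + k • ω)).flip (planeRotation a b ω) :=
    ((ContinuousLinearMap.flipₗᵢ ℝ E E F).continuous.comp (by fun_prop)).clm_apply
      (planeRotation a b).continuous
  have := integral_fderiv_skewAdjoint_unitSphereMeasure (planeRotation_mem_skewAdjoint a b)
    (v := fun ω => u' (x + k • ω) (planeRotation a b ω))
    (v' := fun ω => k • (u'' (x + k • ω)).flip (planeRotation a b ω) +
      (u' (x + k • ω)).comp (planeRotation a b)) (fun ω => ?_)
    ((flip_cont.const_smul k).add (by fun_prop))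
  · simpa using this
  · have affine : HasFDerivAt (fun ω : E => x + k • ω) (k • ContinuousLinearMap.id ℝ E) ω :=
      ((hasFDerivAt_id ω).const_smul k).const_add x
    refine (((hu' _).comp ω affine).clm_apply (planeRotation a b).hasFDerivAt).congr_fderiv ?_
    ext z
    simp [add_comm]

theorem darboux_identity {ι : Type*} [Fintype ι] (b : OrthonormalBasis ι ℝ E)
    {u' : E → E →L[ℝ] F} {u'' : E → E →L[ℝ] E →L[ℝ] F}
    (hu' : ∀ y, HasFDerivAt u' (u'' y) y) (hu'' : Continuous u'') (k : ℝ) (x : E) :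
    k • ∫ ω, (∑ i, u'' (x + k • ω) (b i) (b i)) ∂unitSphereMeasure E =
      k • ∫ ω, u'' (x + k • ω) ω ω ∂unitSphereMeasure E +
        (Fintype.card ι - 1 : ℝ) • ∫ ω, u' (x + k • ω) ω ∂unitSphereMeasure E := by
  have hu'c : Continuous u' := continuous_of_hasFDerivAt hu'
  have summed : ∫ ω, ∑ i, ∑ j, (k • u'' (x + k • ω) (planeRotation (b i) (b j) ω)
      (planeRotation (b i) (b j) ω) + u' (x + k • ω)
        (planeRotation (b i) (b j) (planeRotation (b i) (b j) ω))) ∂unitSphereMeasure E = 0 := by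
    rw [integral_finsetSum _ fun i _ => integrable_unitSphereMeasure (by fun_prop)]
    refine Finset.sum_eq_zero fun i _ => ?_
    rw [integral_finsetSum _ fun j _ => integrable_unitSphereMeasure (by fun_prop)]
    exact Finset.sum_eq_zero fun j _ => integral_planeRotation_unitSphereMeasure hu' hu'' k x _ _
  have pointwise : ∀ᵐ ω ∂unitSphereMeasure E,
      (k • ∑ i, u'' (x + k • ω) (b i) (b i)) - (k • u'' (x + k • ω) ω ω +
        (Fintype.card ι - 1 : ℝ) • u' (x + k • ω) ω) =
      (2⁻¹ : ℝ) • ∑ i, ∑ j, (k • u'' (x + k • ω) (planeRotation (b i) (b j) ω)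
      (planeRotation (b i) (b j) ω) + u' (x + k • ω)
        (planeRotation (b i) (b j) (planeRotation (b i) (b j) ω))) := by
    filter_upwards [ae_norm_eq_one_unitSphereMeasure] with ω hω
    simp only [Finset.sum_add_distrib, ← Finset.smul_sum, ← map_sum,
      sum_bilinear_planeRotation b _ hω, sum_planeRotation_planeRotation, map_smul]
    module
  rw [← sub_eq_zero, ← integral_smul, ← integral_smul, ← integral_smul, ← integral_add,
    ← integral_sub, integral_congr_ae pointwise, integral_smul, summed, smul_zero]
  all_goals exact integrable_unitSphereMeasure (by fun_prop)

end UnitSphere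

/-! ### Spherical means and Kirchhoff's formula -/

section BilinearTrace

variable {E F ι : Type*} [NormedAddCommGroup E] [InnerProductSpace ℝ E] [NormedAddCommGroup F]
  [NormedSpace ℝ F] [Fintype ι] (b : OrthonormalBasis ι ℝ E)

/-- The sum of the diagonal entries of a bilinear map in the orthonormal basis `b`; applied to a
second derivative it gives the Laplacian. -/
def bilinearTrace : (E →L[ℝ] E →L[ℝ] F) →L[ℝ] F :=
  ∑ i, (ContinuousLinearMap.apply ℝ F (b i)).comp (ContinuousLinearMap.apply ℝ (E →L[ℝ] F) (b i))

lemma bilinearTrace_apply (B : E →L[ℝ] E →L[ℝ] F) :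
    bilinearTrace b B = ∑ i, B (b i) (b i) := by
  simp [bilinearTrace]

lemma norm_bilinearTrace_le (B : E →L[ℝ] E →L[ℝ] F) :
    ‖bilinearTrace b B‖ ≤ Fintype.card ι * ‖B‖ := by
  rw [bilinearTrace_apply]
  refine (norm_sum_le_of_le _ fun i _ => B.le_opNorm₂ (b i) (b i)).trans_eq ?_
  simp

end BilinearTrace

section SphericalMean

variable {E : Type*} [NormedAddCommGroup E] [InnerProductSpace ℝ E] [FiniteDimensional ℝ E]
  [MeasurableSpace E] [BorelSpace E] {F : Type*} [NormedAddCommGroup F] [NormedSpace ℝ F]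

/-- The average of `u` over the sphere of radius `|k|` centred at `x`. -/
def sphericalMean (u : E → F) (k : ℝ) (x : E) : F :=
  ∫ ω, u (x + k • ω) ∂unitSphereMeasure E

/-- The average over the sphere of radius `|k|` centred at `x` of the radial derivative of a
function with derivative `u'`. -/
def radialDerivMean (u' : E → E →L[ℝ] F) (k : ℝ) (x : E) : F :=
  ∫ ω, u' (x + k • ω) ω ∂unitSphereMeasure E

/-- Kirchhoff's solution operator: in dimension three `kirchhoff u` solves the wave equation
`∂ₖ² w = Δ w` with initial data `w = 0`, `∂ₖ w = u`. -/
def kirchhoff (u : E → F) (k : ℝ) (x : E) : F := k • sphericalMean u k x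

/-- The derivative in `k` of `kirchhoff u k x`, where `u'` is the derivative of `u`. -/
def kirchhoffDeriv (u : E → F) (u' : E → E →L[ℝ] F) (k : ℝ) (x : E) : F :=
  sphericalMean u k x + k • radialDerivMean u' k x

lemma sphericalMean_zero_radius [CompleteSpace F] (u : E → F) (x : E) :
    sphericalMean u 0 x = u x := by
  simp [sphericalMean]

variable {u : E → F} {u' : E → E →L[ℝ] F} {u'' : E → E →L[ℝ] E →L[ℝ] F}

lemma kirchhoff_zero_time (u : E → F) (x : E) : kirchhoff u 0 x = 0 := zero_smul ..

lemma kirchhoffDeriv_zero_time [CompleteSpace F] (u : E → F) (u' : E → E →L[ℝ] F)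
    (x : E) : kirchhoffDeriv u u' 0 x = u x := by
  simp [kirchhoffDeriv, sphericalMean_zero_radius]

lemma sphericalMean_comp_isometry (u : E → F) (e : E ≃ₗᵢ[ℝ] E) (k : ℝ) (x : E) :
    sphericalMean (u ∘ e) k x = sphericalMean u k (e x) := by
  rw [sphericalMean, sphericalMean,
    ← integral_unitSphereMeasure_comp e fun ω => u (e x + k • ω)]
  simp only [Function.comp_apply, map_smul, map_add]

lemma kirchhoff_comp_isometry (u : E → F) (e : E ≃ₗᵢ[ℝ] E) (k : ℝ) (x : E) :
    kirchhoff (u ∘ e) k x = kirchhoff u k (e x) := by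
  rw [kirchhoff, kirchhoff, sphericalMean_comp_isometry]

variable [Nontrivial E]

lemma norm_sphericalMean_le {k c : ℝ} {x : E} (hu : ∀ y ∈ sphere x |k|, ‖u y‖ ≤ c) :
    ‖sphericalMean u k x‖ ≤ c :=
  norm_integral_unitSphereMeasure_le fun ω hω => hu _ (by simp [norm_smul, hω])

lemma norm_kirchhoff_le {k c : ℝ} {x : E} (hu : ∀ y ∈ sphere x |k|, ‖u y‖ ≤ c) :
    ‖kirchhoff u k x‖ ≤ |k| * c := by
  rw [kirchhoff, norm_smul, Real.norm_eq_abs]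
  gcongr
  exact norm_sphericalMean_le hu

section Continuity

variable {X : Type*} [TopologicalSpace X] [FirstCountableTopology X] [LocallyCompactSpace X]

lemma continuous_sphericalMean {u : X → E → F} (hu : Continuous ↿u) :
    Continuous ↿fun a => sphericalMean (u a) :=
  continuous_integral_unitSphereMeasure (X := X × ℝ × E)
    (T := fun p ω => u p.1 (p.2.2 + p.2.1 • ω))
    (hu.comp (by fun_prop : Continuous fun p : (X × ℝ × E) × E =>
      (p.1.1, p.1.2.2 + p.1.2.1 • p.2)))

lemma continuous_radialDerivMean {u' : X → E → E →L[ℝ] F} (hu' : Continuous ↿u') :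
    Continuous ↿fun a => radialDerivMean (u' a) :=
  continuous_integral_unitSphereMeasure (X := X × ℝ × E)
    (T := fun p ω => u' p.1 (p.2.2 + p.2.1 • ω) ω)
    ((hu'.comp (by fun_prop : Continuous fun p : (X × ℝ × E) × E =>
      (p.1.1, p.1.2.2 + p.1.2.1 • p.2))).clm_apply continuous_snd)

lemma continuous_kirchhoff {u : X → E → F} (hu : Continuous ↿u) :
    Continuous ↿fun a => kirchhoff (u a) :=
  (continuous_fst.comp continuous_snd).smul (continuous_sphericalMean hu)

lemma continuous_kirchhoffDeriv {u : X → E → F} {u' : X → E → E →L[ℝ] F} (hu : Continuous ↿u)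
    (hu' : Continuous ↿u') : Continuous ↿fun a => kirchhoffDeriv (u a) (u' a) :=
  (continuous_sphericalMean hu).add
    ((continuous_fst.comp continuous_snd).smul (continuous_radialDerivMean hu'))

end Continuity

lemma hasFDerivAt_sphericalMean (hu : ∀ y, HasFDerivAt u (u' y) y) (hu' : Continuous u') (k : ℝ)
    (x : E) : HasFDerivAt (sphericalMean u k) (sphericalMean u' k x) x := by
  have hu_cont : Continuous u := continuous_of_hasFDerivAt hu
  exact hasFDerivAt_integral_unitSphereMeasure (Q := fun x ω => u (x + k • ω))
    (Q' := fun x ω => u' (x + k • ω)) (by fun_prop) (by fun_prop)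
    (fun p ω => (hu (p + k • ω)).comp p ((hasFDerivAt_id p).add_const _)) x

lemma hasFDerivAt_radialDerivMean (hu : ∀ y, HasFDerivAt u (u' y) y)
    (hu' : ∀ y, HasFDerivAt u' (u'' y) y) (hu'' : Continuous u'') (k : ℝ) (x : E) :
    HasFDerivAt (radialDerivMean u' k) (radialDerivMean u'' k x) x := by
  have hu'_cont : Continuous u' := continuous_of_hasFDerivAt hu'
  refine hasFDerivAt_integral_unitSphereMeasure (Q := fun x ω => u' (x + k • ω) ω)
    (Q' := fun x ω => u'' (x + k • ω) ω) (by fun_prop) (by fun_prop) (fun p ω => ?_) x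
  refine (((hu' (p + k • ω)).comp p ((hasFDerivAt_id p).add_const _)).clm_apply
    (hasFDerivAt_const ω p)).congr_fderiv ?_
  ext z
  simpa using second_derivative_symmetric hu (hu' (p + k • ω)) z ω

lemma hasFDerivAt_kirchhoff (hu : ∀ y, HasFDerivAt u (u' y) y) (hu' : Continuous u') (k : ℝ)
    (x : E) : HasFDerivAt (kirchhoff u k) (kirchhoff u' k x) x :=
  (hasFDerivAt_sphericalMean hu hu' k x).const_smul k

lemma hasFDerivAt_kirchhoffDeriv (hu : ∀ y, HasFDerivAt u (u' y) y)
    (hu' : ∀ y, HasFDerivAt u' (u'' y) y) (hu'' : Continuous u'') (k : ℝ) (x : E) :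
    HasFDerivAt (kirchhoffDeriv u u' k) (kirchhoffDeriv u' u'' k x) x :=
  (hasFDerivAt_sphericalMean hu (continuous_of_hasFDerivAt hu') k x).add
    ((hasFDerivAt_radialDerivMean hu hu' hu'' k x).const_smul k)

lemma map_sphericalMean {G : Type*} [NormedAddCommGroup G] [NormedSpace ℝ G] [CompleteSpace F]
    [CompleteSpace G] (L : F →L[ℝ] G) (hu : Continuous u) (k : ℝ) (x : E) :
    L (sphericalMean u k x) = sphericalMean (fun y => L (u y)) k x :=
  (L.integral_comp_comm (integrable_unitSphereMeasure (by fun_prop))).symm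

lemma hasDerivAt_sphericalMean (hu : ∀ y, HasFDerivAt u (u' y) y) (hu' : Continuous u') (k : ℝ)
    (x : E) : HasDerivAt (fun k => sphericalMean u k x) (radialDerivMean u' k x) k := by
  have hu_cont : Continuous u := continuous_of_hasFDerivAt hu
  refine hasDerivAt_integral_unitSphereMeasure (Q := fun k ω => u (x + k • ω))
    (Q' := fun k ω => u' (x + k • ω) ω) (by fun_prop) (by fun_prop) (fun k ω => ?_) k
  have ray : HasDerivAt (fun k : ℝ => x + k • ω) ω k := by
    simpa using ((hasDerivAt_id k).smul_const ω).const_add x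
  exact (hu _).comp_hasDerivAt k ray

lemma hasDerivAt_radialDerivMean (hu' : ∀ y, HasFDerivAt u' (u'' y) y) (hu'' : Continuous u'')
    (k : ℝ) (x : E) : HasDerivAt (fun k => radialDerivMean u' k x)
      (∫ ω, u'' (x + k • ω) ω ω ∂unitSphereMeasure E) k := by
  have hu'_cont : Continuous u' := continuous_of_hasFDerivAt hu'
  refine hasDerivAt_integral_unitSphereMeasure (Q := fun k ω => u' (x + k • ω) ω)
    (Q' := fun k ω => u'' (x + k • ω) ω ω) (by fun_prop) (by fun_prop) (fun k ω => ?_) k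
  have ray : HasDerivAt (fun k : ℝ => x + k • ω) ω k := by
    simpa using ((hasDerivAt_id k).smul_const ω).const_add x
  simpa using ((hu' _).comp_hasDerivAt k ray).clm_apply (hasDerivAt_const k ω)

lemma hasDerivAt_kirchhoff (hu : ∀ y, HasFDerivAt u (u' y) y) (hu' : Continuous u') (k : ℝ)
    (x : E) : HasDerivAt (fun k => kirchhoff u k x) (kirchhoffDeriv u u' k x) k := by
  refine ((hasDerivAt_id k).smul (hasDerivAt_sphericalMean hu hu' k x)).congr_deriv ?_
  rw [id, one_smul, add_comm, kirchhoffDeriv]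

theorem hasDerivAt_kirchhoffDeriv [CompleteSpace F] (b : OrthonormalBasis (Fin 3) ℝ E)
    (hu : ∀ y, HasFDerivAt u (u' y) y) (hu' : ∀ y, HasFDerivAt u' (u'' y) y)
    (hu'' : Continuous u'') (k : ℝ) (x : E) : HasDerivAt (fun k => kirchhoffDeriv u u' k x)
      (bilinearTrace b (kirchhoff u'' k x)) k := by
  have darboux := darboux_identity b hu' hu'' k x
  simp only [Fintype.card_fin, ← bilinearTrace_apply] at darboux
  refine ((hasDerivAt_sphericalMean hu (continuous_of_hasFDerivAt hu') k x).add
    ((hasDerivAt_id k).smul (hasDerivAt_radialDerivMean hu' hu'' k x))).congr_deriv ?_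
  have trace_mean := map_sphericalMean (u := u'') (bilinearTrace b) hu'' k x
  rw [kirchhoff, map_smul, trace_mean, sphericalMean, darboux, id, radialDerivMean]
  push_cast
  module

end SphericalMean

/-! ### Integration along conformal time -/

section ConformalTime

/-- The conformal time elapsed between the cosmic times `s` and `t`, which is the radius of the
light cone. -/
def conformalLag (H t s : ℝ) : ℝ := (Real.exp (-H * s) - Real.exp (-H * t)) / H

lemma conformalLag_self (H t : ℝ) : conformalLag H t t = 0 := by simp [conformalLag]

lemma conformalLag_nonneg {H t s : ℝ} (hH : 0 < H) (hst : s ≤ t) : 0 ≤ conformalLag H t s :=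
  div_nonneg (sub_nonneg.2 (Real.exp_le_exp.2 (by nlinarith))) hH.le

lemma conformalLag_add_conformalLag (H t s r : ℝ) :
    conformalLag H t s + conformalLag H s r = conformalLag H t r := by
  simp only [conformalLag]
  ring

lemma hasDerivAt_exp_mul (a t : ℝ) :
    HasDerivAt (fun t => Real.exp (a * t)) (a * Real.exp (a * t)) t := by
  simpa [mul_comm] using ((hasDerivAt_id t).const_mul a).exp

lemma hasDerivAt_conformalLag {H : ℝ} (hH : H ≠ 0) (s t : ℝ) :
    HasDerivAt (fun t => conformalLag H t s) (Real.exp (-H * t)) t := by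
  refine (((hasDerivAt_exp_mul (-H) t).const_sub (Real.exp (-H * s))).div_const H).congr_deriv ?_
  field_simp

variable {E F : Type*} [NormedAddCommGroup E] [NormedAddCommGroup F] [NormedSpace ℝ F]

/-- The superposition up to time `t` of the signals `A s`, emitted at time `s` and evaluated after
the conformal time elapsed between `s` and `t`. -/
def conformalIntegral (H : ℝ) (A : ℝ → ℝ → E → F) (t : ℝ) (x : E) : F :=
  ∫ s in 0..t, Real.exp (2 * H * s) • A s (conformalLag H t s) x

variable {A : ℝ → ℝ → E → F}

lemma continuous_conformalIntegrand (hA : Continuous ↿A) (H : ℝ) :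
    Continuous fun q : (ℝ × E) × ℝ =>
      Real.exp (2 * H * q.2) • A q.2 (conformalLag H q.1.1 q.2) q.1.2 := by
  have lag : Continuous fun q : (ℝ × E) × ℝ => (q.2, conformalLag H q.1.1 q.2, q.1.2) := by
    unfold conformalLag
    fun_prop
  exact (by fun_prop : Continuous fun q : (ℝ × E) × ℝ => Real.exp (2 * H * q.2)).smul
    (hA.comp lag)

lemma continuous_conformalIntegral (hA : Continuous ↿A) (H : ℝ) :
    Continuous ↿(conformalIntegral H A) :=
  intervalIntegral.continuous_parametric_intervalIntegral_of_continuous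
    (continuous_conformalIntegrand hA H) continuous_fst

lemma intervalIntegrable_conformalIntegrand (hA : Continuous ↿A) (H t : ℝ) (x : E) :
    IntervalIntegrable (fun s => Real.exp (2 * H * s) • A s (conformalLag H t s) x) volume 0 t :=
  ((continuous_conformalIntegrand hA H).comp (Continuous.prodMk_right (t, x))).intervalIntegrable
    _ _

lemma hasFDerivAt_conformalIntegral [NormedSpace ℝ E] [ProperSpace E]
    {A' : ℝ → ℝ → E → E →L[ℝ] F} (hA : Continuous ↿A) (hA' : Continuous ↿A')
    (h : ∀ s k x, HasFDerivAt (A s k) (A' s k x) x) (H t : ℝ) (x : E) :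
    HasFDerivAt (conformalIntegral H A t) (conformalIntegral H A' t x) x := by
  have slice : Continuous fun q : E × ℝ => ((t, q.1), q.2) := by fun_prop
  exact hasFDerivAt_intervalIntegral_of_continuous
    ((continuous_conformalIntegrand hA H).comp slice)
    ((continuous_conformalIntegrand hA' H).comp slice)
    (fun x s => (h s (conformalLag H t s) x).const_smul _) 0 t x

variable [CompleteSpace F]

lemma hasDerivAt_conformalIntegral {A' : ℝ → ℝ → E → F} (hA : Continuous ↿A)
    (hA' : Continuous ↿A') (h : ∀ s k x, HasDerivAt (fun k => A s k x) (A' s k x) k) {H : ℝ}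
    (hH : H ≠ 0) (t : ℝ) (x : E) :
    HasDerivAt (fun t => conformalIntegral H A t x)
      (Real.exp (2 * H * t) • A t 0 x + Real.exp (-H * t) • conformalIntegral H A' t x) t := by
  have slice : Continuous fun q : ℝ × ℝ => ((q.1, x), q.2) := by fun_prop
  have integrand_deriv (t s : ℝ) :
      HasDerivAt (fun t => Real.exp (2 * H * s) • A s (conformalLag H t s) x)
        (Real.exp (-H * t) • Real.exp (2 * H * s) • A' s (conformalLag H t s) x) t := by
    rw [smul_comm]
    exact ((h s _ x).scomp t (hasDerivAt_conformalLag hH s t)).const_smul _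
  refine (hasDerivAt_intervalIntegral_diagonal
    ((continuous_conformalIntegrand hA H).comp slice) ?_ integrand_deriv 0 t).congr_deriv ?_
  · exact (by fun_prop : Continuous fun q : ℝ × ℝ => Real.exp (-H * q.1)).smul
      ((continuous_conformalIntegrand hA' H).comp slice)
  · rw [intervalIntegral.integral_smul, conformalLag_self, conformalIntegral]

lemma map_conformalIntegral {G : Type*} [NormedAddCommGroup G] [NormedSpace ℝ G] [CompleteSpace G]
    (hA : Continuous ↿A) (T : F →L[ℝ] G) (H t : ℝ) (x : E) :
    T (conformalIntegral H A t x) = conformalIntegral H (fun s k y => T (A s k y)) t x := by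
  simp only [conformalIntegral, ← map_smul]
  exact (T.intervalIntegral_comp_comm (intervalIntegrable_conformalIntegrand hA H t x)).symm

end ConformalTime

/-! ### Duhamel's formula for the linear equation of mass `2H²` -/

/-- `u'` is the derivative of `u` in the space variable, and both are jointly continuous. -/
structure HasSpatialFDeriv {E F : Type*} [NormedAddCommGroup E] [NormedSpace ℝ E]
    [NormedAddCommGroup F] [NormedSpace ℝ F] (u : ℝ → E → F) (u' : ℝ → E → E →L[ℝ] F) : Prop where
  continuous : Continuous ↿u
  continuous_fderiv : Continuous ↿u'
  hasFDerivAt : ∀ t x, HasFDerivAt (u t) (u' t x) x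

lemma HasSpatialFDeriv.add {E F : Type*} [NormedAddCommGroup E] [NormedSpace ℝ E]
    [NormedAddCommGroup F] [NormedSpace ℝ F] {u v : ℝ → E → F} {u' v' : ℝ → E → E →L[ℝ] F}
    (hu : HasSpatialFDeriv u u') (hv : HasSpatialFDeriv v v') :
    HasSpatialFDeriv (fun t x => u t x + v t x) (fun t x => u' t x + v' t x) where
  continuous := hu.continuous.add hv.continuous
  continuous_fderiv := hu.continuous_fderiv.add hv.continuous_fderiv
  hasFDerivAt t x := (hu.hasFDerivAt t x).add (hv.hasFDerivAt t x)

section Duhamel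

variable {E : Type*} [NormedAddCommGroup E] [InnerProductSpace ℝ E] [FiniteDimensional ℝ E]
  [MeasurableSpace E] [BorelSpace E] {F : Type*} [NormedAddCommGroup F] [NormedSpace ℝ F]

/-- In dimension three, the solution of `∂ₜ²w + 3H ∂ₜw + 2H² w - e^{-2Ht} Δw = S` with zero Cauchy
data. For the mass `2H²` the substitution `w = e^{-Ht} v` turns this equation, in conformal time,
into the wave equation of Minkowski space for `v`. -/
def duhamel (H : ℝ) (S : ℝ → E → F) (t : ℝ) (x : E) : F :=
  Real.exp (-H * t) • conformalIntegral H (fun s => kirchhoff (S s)) t x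

/-- The time derivative of `duhamel H S`, where `S'` is the spatial derivative of `S`. -/
def duhamelVelocity (H : ℝ) (S : ℝ → E → F) (S' : ℝ → E → E →L[ℝ] F) (t : ℝ) (x : E) : F :=
  Real.exp (-2 * H * t) • conformalIntegral H (fun s => kirchhoffDeriv (S s) (S' s)) t x
    - H • duhamel H S t x

variable {H : ℝ} {S : ℝ → E → F} {S' : ℝ → E → E →L[ℝ] F} {S'' : ℝ → E → E →L[ℝ] E →L[ℝ] F}

lemma duhamel_zero_time (H : ℝ) (S : ℝ → E → F) (x : E) : duhamel H S 0 x = 0 := by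
  simp [duhamel, conformalIntegral]

lemma duhamelVelocity_zero_time (H : ℝ) (S : ℝ → E → F) (S' : ℝ → E → E →L[ℝ] F) (x : E) :
    duhamelVelocity H S S' 0 x = 0 := by
  simp [duhamelVelocity, duhamel, conformalIntegral]

lemma duhamel_comp_isometry (H : ℝ) (S : ℝ → E → F) (e : E ≃ₗᵢ[ℝ] E) (t : ℝ) (x : E) :
    duhamel H (fun s => S s ∘ e) t x = duhamel H S t (e x) := by
  simp only [duhamel, conformalIntegral, kirchhoff_comp_isometry]

variable [Nontrivial E]

lemma duhamel_eq_zero {t : ℝ} {x : E}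
    (hS : ∀ s ∈ uIcc 0 t, ∀ y ∈ sphere x |conformalLag H t s|, S s y = 0) :
    duhamel H S t x = 0 := by
  rw [duhamel, conformalIntegral, intervalIntegral.integral_congr (g := fun _ => 0),
    intervalIntegral.integral_zero, smul_zero]
  intro s hs
  have : ‖kirchhoff (S s) (conformalLag H t s) x‖ ≤ |conformalLag H t s| * 0 :=
    norm_kirchhoff_le fun y hy => by rw [hS s hs y hy, norm_zero]
  simp only [norm_le_zero_iff.1 (this.trans_eq (mul_zero _)), smul_zero]

lemma continuous_duhamel (hS : Continuous ↿S) (H : ℝ) : Continuous ↿(duhamel H S) :=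
  (by fun_prop : Continuous fun p : ℝ × E => Real.exp (-H * p.1)).smul
    (continuous_conformalIntegral (continuous_kirchhoff hS) H)

lemma duhamel_sub {S₁ S₂ : ℝ → E → F} (hS₁ : Continuous ↿S₁) (hS₂ : Continuous ↿S₂) (H t : ℝ)
    (x : E) : duhamel H (fun s y => S₁ s y - S₂ s y) t x = duhamel H S₁ t x - duhamel H S₂ t x := by
  have kirchhoff_sub (s k : ℝ) (y : E) : kirchhoff (fun y => S₁ s y - S₂ s y) k y =
      kirchhoff (S₁ s) k y - kirchhoff (S₂ s) k y := by
    simp only [kirchhoff, sphericalMean, ← smul_sub]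
    rw [integral_sub] <;> exact integrable_unitSphereMeasure (by fun_prop)
  simp only [duhamel, conformalIntegral, kirchhoff_sub, smul_sub]
  rw [intervalIntegral.integral_sub, smul_sub]
  · exact intervalIntegrable_conformalIntegrand (continuous_kirchhoff hS₁) H t x
  · exact intervalIntegrable_conformalIntegrand (continuous_kirchhoff hS₂) H t x

lemma HasSpatialFDeriv.duhamel (hS : HasSpatialFDeriv S S') (H : ℝ) :
    HasSpatialFDeriv (duhamel H S) (duhamel H S') where
  continuous := continuous_duhamel hS.continuous H
  continuous_fderiv := continuous_duhamel hS.continuous_fderiv H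
  hasFDerivAt t x := (hasFDerivAt_conformalIntegral (continuous_kirchhoff hS.continuous)
    (continuous_kirchhoff hS.continuous_fderiv) (fun s => hasFDerivAt_kirchhoff (hS.hasFDerivAt s)
      (hS.continuous_fderiv.comp (Continuous.prodMk_right s))) H t x).const_smul _

lemma continuous_duhamelVelocity (hS : Continuous ↿S) (hS' : Continuous ↿S') (H : ℝ) :
    Continuous ↿(duhamelVelocity H S S') :=
  ((by fun_prop : Continuous fun p : ℝ × E => Real.exp (-2 * H * p.1)).smul
    (continuous_conformalIntegral (continuous_kirchhoffDeriv hS hS') H)).sub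
    ((continuous_duhamel hS H).const_smul H)

lemma hasFDerivAt_duhamelVelocity (hS : HasSpatialFDeriv S S') (hS' : HasSpatialFDeriv S' S'')
    (H t : ℝ) (x : E) :
    HasFDerivAt (duhamelVelocity H S S' t) (duhamelVelocity H S' S'' t x) x :=
  ((hasFDerivAt_conformalIntegral
    (continuous_kirchhoffDeriv hS.continuous hS.continuous_fderiv)
    (continuous_kirchhoffDeriv hS'.continuous hS'.continuous_fderiv)
    (fun s => hasFDerivAt_kirchhoffDeriv (hS.hasFDerivAt s) (hS'.hasFDerivAt s)
      (hS'.continuous_fderiv.comp (Continuous.prodMk_right s))) H t x).const_smul _).sub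
    (((hS.duhamel H).hasFDerivAt t x).const_smul H)

variable [CompleteSpace F]

lemma hasDerivAt_duhamel (hH : H ≠ 0) (hS : HasSpatialFDeriv S S') (t : ℝ) (x : E) :
    HasDerivAt (fun t => duhamel H S t x) (duhamelVelocity H S S' t x) t := by
  refine ((hasDerivAt_exp_mul (-H) t).smul (hasDerivAt_conformalIntegral
    (continuous_kirchhoff hS.continuous)
    (continuous_kirchhoffDeriv hS.continuous hS.continuous_fderiv)
    (fun s => hasDerivAt_kirchhoff (hS.hasFDerivAt s)
      (hS.continuous_fderiv.comp (Continuous.prodMk_right s))) hH t x)).congr_deriv ?_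
  have exp_sq : Real.exp (-2 * H * t) = Real.exp (-H * t) * Real.exp (-H * t) := by
    rw [← Real.exp_add]
    ring_nf
  rw [kirchhoff_zero_time, duhamelVelocity, duhamel, exp_sq]
  module

theorem hasDerivAt_duhamelVelocity (b : OrthonormalBasis (Fin 3) ℝ E) (hH : H ≠ 0)
    (hS : HasSpatialFDeriv S S') (hS' : HasSpatialFDeriv S' S'') (t : ℝ) (x : E) :
    HasDerivAt (fun t => duhamelVelocity H S S' t x)
      (S t x - (3 * H) • duhamelVelocity H S S' t x - (2 * H ^ 2) • duhamel H S t x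
        + Real.exp (-2 * H * t) • bilinearTrace b (duhamel H S'' t x)) t := by
  have trace_integral := map_conformalIntegral (F := E →L[ℝ] E →L[ℝ] F)
    (A := fun s => kirchhoff (S'' s)) (continuous_kirchhoff hS'.continuous_fderiv)
    (bilinearTrace b) H t x
  have integral_deriv := hasDerivAt_conformalIntegral
    (A' := fun s k y => bilinearTrace b (kirchhoff (S'' s) k y))
    (continuous_kirchhoffDeriv hS.continuous hS.continuous_fderiv)
    ((bilinearTrace b).continuous.comp (continuous_kirchhoff hS'.continuous_fderiv))
    (fun s => hasDerivAt_kirchhoffDeriv b (hS.hasFDerivAt s) (hS'.hasFDerivAt s)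
      (hS'.continuous_fderiv.comp (Continuous.prodMk_right s))) hH t x
  rw [kirchhoffDeriv_zero_time, ← trace_integral] at integral_deriv
  refine (((hasDerivAt_exp_mul (-2 * H) t).smul integral_deriv).sub
    ((hasDerivAt_duhamel hH hS t x).const_smul H)).congr_deriv ?_
  have exp_cancel : Real.exp (-2 * H * t) * Real.exp (2 * H * t) = 1 := by
    rw [← Real.exp_add]
    simp
  rw [duhamelVelocity, duhamel, duhamel, map_smul, smul_add, smul_smul, exp_cancel]
  module

theorem contDiff_two_duhamel (b : OrthonormalBasis (Fin 3) ℝ E) (hH : H ≠ 0)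
    (hS : HasSpatialFDeriv S S') (hS' : HasSpatialFDeriv S' S'') :
    ContDiff ℝ 2 (Function.uncurry (duhamel H S)) := by
  have hw := hS.duhamel H
  have hw' := hS'.duhamel H
  have hv := continuous_duhamelVelocity hS.continuous hS.continuous_fderiv H
  have hv' := continuous_duhamelVelocity hS'.continuous hS'.continuous_fderiv H
  refine contDiff_succ_of_partials (n := 1) (hasDerivAt_duhamel hH hS) hw.hasFDerivAt
    (contDiff_succ_of_partials (n := 0) (hasDerivAt_duhamelVelocity b hH hS hS')
      (hasFDerivAt_duhamelVelocity hS hS' H) (contDiff_zero.2 ?_) (contDiff_zero.2 hv'))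
    (contDiff_succ_of_partials (n := 0) (hasDerivAt_duhamel hH hS') hw'.hasFDerivAt
      (contDiff_zero.2 hv') (contDiff_zero.2 hw'.continuous_fderiv))
  exact ((hS.continuous.sub (hv.const_smul _)).sub (hw.continuous.const_smul _)).add
    ((by fun_prop : Continuous fun p : ℝ × E => Real.exp (-2 * H * p.1)).smul
      ((bilinearTrace b).continuous.comp hw'.continuous_fderiv))

end Duhamel

/-! ### Exponentially weighted estimates -/

section ExpBound

variable {E F : Type*} [NormedAddCommGroup F]

/-- At nonnegative times `u` grows at most like `c e^{μt}`, uniformly in space. -/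
def ExpBound (μ c : ℝ) (u : ℝ → E → F) : Prop :=
  ∀ t, 0 ≤ t → ∀ x, ‖u t x‖ ≤ c * Real.exp (μ * t)

variable {μ c : ℝ} {u : ℝ → E → F}

lemma ExpBound.nonneg [Nonempty E] (hu : ExpBound μ c u) : 0 ≤ c :=
  (norm_nonneg _).trans (by simpa using hu 0 le_rfl (Classical.arbitrary E))

lemma ExpBound.mono {μ' c' : ℝ} [Nonempty E] (hu : ExpBound μ c u) (hμ : μ ≤ μ') (hc : c ≤ c') :
    ExpBound μ' c' u := fun t ht x =>
  (hu t ht x).trans (by have := hu.nonneg.trans hc; gcongr)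

lemma ExpBound.tendstoUniformly {ι : Type*} {l : Filter ι} {c : ι → ℝ} {v : ι → ℝ → E → F}
    (hv : ∀ i, ExpBound μ (c i) fun t x => v i t x - u t x) (hc : Tendsto c l (𝓝 0)) {t : ℝ}
    (ht : 0 ≤ t) : TendstoUniformly (fun i => v i t) (u t) l := by
  rw [Metric.tendstoUniformly_iff]
  intro ε hε
  have := hc.mul_const (Real.exp (μ * t))
  rw [zero_mul] at this
  filter_upwards [this.eventually_lt_const hε] with i hi x
  rw [dist_comm, dist_eq_norm]
  exact (hv i t ht x).trans_lt hi

lemma ExpBound.comp_lipschitz {L c₀ : ℝ} {R : ℝ → E → F → F} (hu : ExpBound μ c u)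
    (hR_bound : ExpBound μ c₀ fun s y => R s y 0) (hL : 0 ≤ L)
    (hR_lip : ∀ s, 0 ≤ s → ∀ y v w, ‖R s y v - R s y w‖ ≤ L * ‖v - w‖) :
    ExpBound μ (c₀ + L * c) fun s y => R s y (u s y) := fun s hs y =>
  calc ‖R s y (u s y)‖ ≤ ‖R s y 0‖ + ‖R s y (u s y) - R s y 0‖ := norm_le_norm_add_norm_sub' _ _
    _ ≤ c₀ * Real.exp (μ * s) + L * (c * Real.exp (μ * s)) := by
        gcongr
        · exact hR_bound s hs y
        · refine (hR_lip s hs y _ _).trans ?_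
          rw [sub_zero]
          gcongr
          exact hu s hs y
    _ = (c₀ + L * c) * Real.exp (μ * s) := by ring

/-- The norm of `duhamel H` with respect to the weight `e^{μt}`. -/
def duhamelGain (H μ : ℝ) : ℝ := 1 / ((H + μ) * (2 * H + μ))

variable {H : ℝ}

lemma duhamelGain_nonneg (hH : 0 < H) (hμ : 0 ≤ μ) : 0 ≤ duhamelGain H μ := by
  unfold duhamelGain
  positivity

lemma duhamelGain_anti {ν : ℝ} (hH : 0 < H) (hμ : 0 ≤ μ) (hμν : μ ≤ ν) :
    duhamelGain H ν ≤ duhamelGain H μ := by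
  have : 0 ≤ ν := hμ.trans hμν
  unfold duhamelGain
  gcongr

lemma integral_conformalLag_mul_exp_le (hH : 0 < H) (hμ : 0 ≤ μ) {t : ℝ} (ht : 0 ≤ t) :
    ∫ s in 0..t, conformalLag H t s * Real.exp ((2 * H + μ) * s) ≤
      duhamelGain H μ * Real.exp ((H + μ) * t) := by
  let P (s : ℝ) := (Real.exp ((H + μ) * s) / (H + μ)
    - Real.exp (-H * t) * Real.exp ((2 * H + μ) * s) / (2 * H + μ)) / H
  have primitive (s : ℝ) :
      HasDerivAt P (conformalLag H t s * Real.exp ((2 * H + μ) * s)) s := by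
    have exp_split : Real.exp ((H + μ) * s) = Real.exp (-H * s) * Real.exp ((2 * H + μ) * s) := by
      rw [← Real.exp_add]
      ring_nf
    refine ((((hasDerivAt_exp_mul (H + μ) s).div_const (H + μ)).sub
      (((hasDerivAt_exp_mul (2 * H + μ) s).const_mul (Real.exp (-H * t))).div_const
        (2 * H + μ))).div_const H).congr_deriv ?_
    rw [exp_split, conformalLag]
    field_simp
  have P_zero : 0 ≤ P 0 := by
    simp only [P, mul_zero, Real.exp_zero, mul_one]
    have : Real.exp (-H * t) ≤ 1 := Real.exp_le_one_iff.2 (by nlinarith)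
    refine div_nonneg (sub_nonneg.2 ?_) hH.le
    gcongr
    linarith
  have P_t : P t = duhamelGain H μ * Real.exp ((H + μ) * t) := by
    have : Real.exp (-H * t) * Real.exp ((2 * H + μ) * t) = Real.exp ((H + μ) * t) := by
      rw [← Real.exp_add]
      ring_nf
    simp only [P, this, duhamelGain]
    field_simp
    ring
  rw [intervalIntegral.integral_eq_sub_of_hasDerivAt (fun s _ => primitive s)
    (Continuous.intervalIntegrable (by unfold conformalLag; fun_prop) _ _)]
  linarith

variable [NormedSpace ℝ F]

/-- Multiplication by the weight `e^{μt}`, `t ≥ 0`, identifies bounded functions with functions of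
exponential growth. -/
def expScale (μ : ℝ) (v : ℝ × E → F) (t : ℝ) (x : E) : F := Real.exp (μ * max t 0) • v (t, x)

lemma expBound_expScale {v : ℝ × E → F} (hv : ∀ p, ‖v p‖ ≤ c) :
    ExpBound μ c (expScale μ v) := fun t ht x => by
  rw [expScale, max_eq_left ht, norm_smul, Real.norm_of_nonneg (Real.exp_pos _).le, mul_comm]
  gcongr
  exact hv _

lemma expScale_sub (μ : ℝ) (v w : ℝ × E → F) (t : ℝ) (x : E) :
    expScale μ (v - w) t x = expScale μ v t x - expScale μ w t x := smul_sub ..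

lemma norm_le_of_norm_expScale_le {v : ℝ × E → F} {t : ℝ} {x : E}
    (h : ‖expScale μ v t x‖ ≤ c * Real.exp (μ * max t 0)) : ‖v (t, x)‖ ≤ c := by
  rw [expScale, norm_smul, Real.norm_of_nonneg (Real.exp_pos _).le, mul_comm] at h
  exact le_of_mul_le_mul_right h (Real.exp_pos _)

variable [TopologicalSpace E]

lemma continuous_expScale {v : ℝ × E → F} (hv : Continuous v) (μ : ℝ) :
    Continuous ↿(expScale μ v) :=
  (by fun_prop : Continuous fun p : ℝ × E => Real.exp (μ * max p.1 0)).smul hv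

lemma exists_boundedContinuousFunction_expScale_eq {w : ℝ → E → F} (hw : Continuous ↿w)
    (hwc : ExpBound μ c w) :
    ∃ v : BoundedContinuousFunction (ℝ × E) F, ∀ t x, expScale μ v t x = w (max t 0) x := by
  refine ⟨.ofNormedAddCommGroup (fun p => Real.exp (-μ * max p.1 0) • w (max p.1 0) p.2)
    (by fun_prop) c ?_, fun t x => ?_⟩
  · rintro ⟨t, x⟩
    have := hwc (max t 0) (le_max_right t 0) x
    rwa [norm_smul, Real.norm_of_nonneg (Real.exp_pos _).le, neg_mul, Real.exp_neg,
      inv_mul_le_iff₀' (Real.exp_pos _)]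
  · change Real.exp _ • Real.exp _ • w (max t 0) x = _
    rw [smul_smul, ← Real.exp_add]
    simp

end ExpBound

section DuhamelEstimate

variable {E : Type*} [NormedAddCommGroup E] [InnerProductSpace ℝ E] [FiniteDimensional ℝ E]
  [MeasurableSpace E] [BorelSpace E] [Nontrivial E] {F : Type*} [NormedAddCommGroup F]
  [NormedSpace ℝ F] {H μ c : ℝ} {S : ℝ → E → F}

lemma norm_duhamel_le (hH : 0 < H) (hμ : 0 ≤ μ) (hc : 0 ≤ c) {t : ℝ} (ht : 0 ≤ t) {x : E}
    (hS : ∀ s ∈ Icc 0 t, ∀ y ∈ sphere x (conformalLag H t s), ‖S s y‖ ≤ c * Real.exp (μ * s)) :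
    ‖duhamel H S t x‖ ≤ c * duhamelGain H μ * Real.exp (μ * t) := by
  have integrand_le (s : ℝ) (hs : s ∈ Ioc 0 t) :
      ‖Real.exp (2 * H * s) • kirchhoff (S s) (conformalLag H t s) x‖ ≤
        c * (conformalLag H t s * Real.exp ((2 * H + μ) * s)) := by
    have lag_abs := abs_of_nonneg (conformalLag_nonneg hH hs.2)
    have := norm_kirchhoff_le (by rw [lag_abs]; exact hS s (Ioc_subset_Icc_self hs))
    rw [norm_smul, Real.norm_of_nonneg (Real.exp_pos _).le, add_mul, Real.exp_add]
    calc _ ≤ Real.exp (2 * H * s) * (|conformalLag H t s| * (c * Real.exp (μ * s))) := by gcongr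
      _ = _ := by rw [lag_abs]; ring
  rw [duhamel, norm_smul, Real.norm_of_nonneg (Real.exp_pos _).le]
  calc _ ≤ Real.exp (-H * t) * (c * (duhamelGain H μ * Real.exp ((H + μ) * t))) := by
        gcongr
        refine (intervalIntegral.norm_integral_le_of_norm_le ht (.of_forall integrand_le)
          (Continuous.intervalIntegrable (by unfold conformalLag; fun_prop) _ _)).trans ?_
        rw [intervalIntegral.integral_const_mul]
        gcongr
        exact integral_conformalLag_mul_exp_le hH hμ ht
    _ = c * duhamelGain H μ * (Real.exp (-H * t) * Real.exp ((H + μ) * t)) := by ring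
    _ = c * duhamelGain H μ * Real.exp (μ * t) := by
        rw [← Real.exp_add]
        ring_nf

lemma ExpBound.duhamel (hS : ExpBound μ c S) (hH : 0 < H) (hμ : 0 ≤ μ) :
    ExpBound μ (c * duhamelGain H μ) (duhamel H S) := fun _ ht _ =>
  norm_duhamel_le hH hμ hS.nonneg ht fun s hs y _ => hS s hs.1 y

end DuhamelEstimate

/-! ### Mild solutions -/

section MildSolution

variable {E : Type*} [NormedAddCommGroup E] [InnerProductSpace ℝ E] [FiniteDimensional ℝ E]
  [MeasurableSpace E] [BorelSpace E] {F : Type*} [NormedAddCommGroup F] [NormedSpace ℝ F]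

/-- `u` solves the integral equation `u = Φ + duhamel H (R(s, y, u))` at nonnegative times, and is
extended by its initial value to negative times. -/
def IsMildSolution (H : ℝ) (Φ : ℝ → E → F) (R : ℝ → E → F → F) (u : ℝ → E → F) : Prop :=
  ∀ t x, u t x = Φ (max t 0) x + duhamel H (fun s y => R s y (u s y)) (max t 0) x

variable {H μ L θ : ℝ} {Φ : ℝ → E → F} {R : ℝ → E → F → F} {u : ℝ → E → F}

lemma IsMildSolution.eq_of_nonneg (hu : IsMildSolution H Φ R u) {t : ℝ} (ht : 0 ≤ t) (x : E) :
    u t x = Φ t x + duhamel H (fun s y => R s y (u s y)) t x := by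
  rw [hu t x, max_eq_left ht]

lemma IsMildSolution.eq_max (hu : IsMildSolution H Φ R u) (t : ℝ) : u t = u (max t 0) := by
  funext x
  rw [hu t x, hu (max t 0) x, max_eq_left (le_max_right t 0)]

variable [Nontrivial E]

lemma expBound_duhamel_sub_duhamel {v : ℝ → E → F} {c : ℝ}
    (h : ExpBound μ c fun t x => u t x - v t x) (hH : 0 < H) (hμ : 0 ≤ μ) (hR : Continuous ↿R)
    (hu : Continuous ↿u) (hv : Continuous ↿v) (hL : 0 ≤ L)
    (hR_lip : ∀ s, 0 ≤ s → ∀ y v w, ‖R s y v - R s y w‖ ≤ L * ‖v - w‖)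
    (hLθ : L * duhamelGain H μ ≤ θ) :
    ExpBound μ (θ * c) fun t x => duhamel H (fun s y => R s y (u s y)) t x -
      duhamel H (fun s y => R s y (v s y)) t x := by
  have source_bound : ExpBound μ (L * c) fun s y => R s y (u s y) - R s y (v s y) :=
    fun s hs y => (hR_lip s hs y _ _).trans <| by
      rw [mul_assoc]
      gcongr
      exact h s hs y
  have gain : L * c * duhamelGain H μ ≤ θ * c := by
    rw [mul_right_comm]
    gcongr
    exact h.nonneg
  intro t ht x
  beta_reduce
  rw [← duhamel_sub (by fun_prop) (by fun_prop)]
  exact (source_bound.duhamel hH hμ).mono le_rfl gain t ht x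

section Existence

/-- The bound in the weight `e^{μt}` for mild solutions whose free part is bounded by `c` and whose
source is a perturbation, contracting by the factor `θ`, of a source bounded by `c₀`. -/
def mildBound (H μ θ c c₀ : ℝ) : ℝ := (c + c₀ * duhamelGain H μ) / (1 - θ)

open BoundedContinuousFunction

theorem exists_isMildSolution [CompleteSpace F] {c c₀ : ℝ} (hH : 0 < H) (hμ : 0 ≤ μ)
    (hΦ : Continuous ↿Φ) (hR : Continuous ↿R) (hΦ_bound : ExpBound μ c Φ)
    (hR_bound : ExpBound μ c₀ fun s y => R s y 0) (hL : 0 ≤ L)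
    (hR_lip : ∀ s, 0 ≤ s → ∀ y v w, ‖R s y v - R s y w‖ ≤ L * ‖v - w‖)
    (hLθ : L * duhamelGain H μ ≤ θ) (hθ : θ < 1) :
    ∃ u, Continuous ↿u ∧ IsMildSolution H Φ R u ∧
      ExpBound μ (mildBound H μ θ c c₀) u := by
  let N (u : ℝ → E → F) (t : ℝ) (x : E) : F := Φ t x + duhamel H (fun s y => R s y (u s y)) t x
  have hN {u : ℝ → E → F} (hu : Continuous ↿u) : Continuous ↿(N u) :=
    hΦ.add (continuous_duhamel (by fun_prop) H)
  have N_bound {u : ℝ → E → F} {a : ℝ} (hu : ExpBound μ a u) :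
      ExpBound μ (c + (c₀ + L * a) * duhamelGain H μ) (N u) := fun t ht x =>
    (norm_add_le _ _).trans ((add_le_add (hΦ_bound t ht x)
      ((hu.comp_lipschitz hR_bound hL hR_lip).duhamel hH hμ t ht x)).trans_eq (by ring))
  have hv_cont (v : ℝ × E →ᵇ F) := continuous_expScale v.continuous μ
  choose T hT using fun v : ℝ × E →ᵇ F => exists_boundedContinuousFunction_expScale_eq
    (hN (hv_cont v)) (N_bound (expBound_expScale v.norm_coe_le_norm))
  have hθ0 : 0 ≤ θ := (mul_nonneg hL (duhamelGain_nonneg hH hμ)).trans hLθ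
  have T_contracting : ContractingWith ⟨θ, hθ0⟩ T := by
    refine ⟨hθ, .of_dist_le_mul fun v w =>
      (dist_le (mul_nonneg hθ0 dist_nonneg)).2 fun ⟨t, x⟩ => ?_⟩
    have scaled_sub : ExpBound μ (dist v w) fun t x => expScale μ v t x - expScale μ w t x := by
      simp_rw [← expScale_sub]
      exact expBound_expScale fun p => (dist_eq_norm (v p) (w p)).ge.trans (dist_coe_le_dist p)
    rw [dist_eq_norm]
    refine norm_le_of_norm_expScale_le (μ := μ) (v := T v - T w) ?_
    refine (congrArg norm ?_).trans_le (expBound_duhamel_sub_duhamel scaled_sub hH hμ hR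
      (hv_cont v) (hv_cont w) hL hR_lip hLθ (max t 0) (le_max_right t 0) x)
    beta_reduce
    rw [← add_sub_add_left_eq_sub _ _ (Φ (max t 0) x)]
    exact (expScale_sub μ _ _ t x).trans (congrArg₂ _ (hT v t x) (hT w t x))
  have fixed := T_contracting.fixedPoint_isFixedPt
  set v := T_contracting.fixedPoint
  have mild : IsMildSolution H Φ R (expScale μ v) := fun t x => by
    conv_lhs => rw [← fixed]
    exact hT v t x
  have norm_v : ‖v‖ ≤ c + (c₀ + L * ‖v‖) * duhamelGain H μ := by
    have hN_v := N_bound (expBound_expScale (μ := μ) v.norm_coe_le_norm)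
    refine norm_le (hN_v.nonneg) |>.2 fun ⟨t, x⟩ => norm_le_of_norm_expScale_le (μ := μ) ?_
    rw [mild t x]
    exact hN_v (max t 0) (le_max_right t 0) x
  refine ⟨expScale μ v, hv_cont v, mild, expBound_expScale fun p => (v.norm_coe_le_norm p).trans ?_⟩
  rw [mildBound, le_div_iff₀ (sub_pos.2 hθ)]
  nlinarith [norm_nonneg v]

end Existence

end MildSolution

/-! ### Uniqueness and finite speed of propagation -/

section Uniqueness

variable {E : Type*} [NormedAddCommGroup E]

/-- A region of space-time that contains, with each of its points, the part of the past light cone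
of that point lying in `t ≥ 0`. -/
def IsPastClosed (H : ℝ) (D : Set (ℝ × E)) : Prop :=
  ∀ t x, (t, x) ∈ D → ∀ s ∈ Icc 0 t, ∀ y ∈ sphere x (conformalLag H t s), (s, y) ∈ D

lemma isPastClosed_univ (H : ℝ) : IsPastClosed H (univ : Set (ℝ × E)) :=
  fun _ _ _ _ _ _ _ => mem_univ _

lemma isPastClosed_lightCone_compl (H ρ : ℝ) :
    IsPastClosed H {p : ℝ × E | ρ + conformalLag H p.1 0 < ‖p.2‖} := by
  intro t x hx s _ y hy
  have : ‖x‖ ≤ ‖y‖ + conformalLag H t s := by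
    rw [← mem_sphere_iff_norm.1 hy, norm_sub_rev]
    exact norm_le_norm_add_norm_sub' x y
  simp only [mem_ofPred_eq] at hx ⊢
  linarith [conformalLag_add_conformalLag H t s 0]

variable [InnerProductSpace ℝ E] [FiniteDimensional ℝ E] [MeasurableSpace E] [BorelSpace E]
  [Nontrivial E] {F : Type*} [NormedAddCommGroup F] [NormedSpace ℝ F] {H μ L θ a : ℝ}
  {Φ : ℝ → E → F} {R : ℝ → E → F → F} {u : ℝ → E → F}

theorem eq_zero_of_norm_le_duhamel {D : Set (ℝ × E)} (hD : IsPastClosed H D) (hH : 0 < H)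
    (hμ : 0 ≤ μ) {w S : ℝ → E → F} (hw : ExpBound μ a w) (hL : 0 ≤ L)
    (hS : ∀ s, 0 ≤ s → ∀ y, (s, y) ∈ D → ‖S s y‖ ≤ L * ‖w s y‖)
    (hwS : ∀ t, 0 ≤ t → ∀ x, (t, x) ∈ D → ‖w t x‖ ≤ ‖duhamel H S t x‖)
    (hLθ : L * duhamelGain H μ ≤ θ) (hθ : θ < 1) {t : ℝ} (ht : 0 ≤ t) {x : E}
    (hx : (t, x) ∈ D) : w t x = 0 := by
  have hθ0 : 0 ≤ θ := (mul_nonneg hL (duhamelGain_nonneg hH hμ)).trans hLθ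
  have ha := hw.nonneg
  have geometric (n : ℕ) : ∀ t, 0 ≤ t → ∀ x, (t, x) ∈ D →
      ‖w t x‖ ≤ a * θ ^ n * Real.exp (μ * t) := by
    induction n with
    | zero => simpa using fun t ht x _ => hw t ht x
    | succ n ih =>
      intro t ht x hx
      have source_bound : ∀ s ∈ Icc 0 t, ∀ y ∈ sphere x (conformalLag H t s),
          ‖S s y‖ ≤ L * (a * θ ^ n) * Real.exp (μ * s) := fun s hs y hy =>
        (hS s hs.1 y (hD t x hx s hs y hy)).trans <| by
          rw [mul_assoc]
          gcongr
          exact ih s hs.1 y (hD t x hx s hs y hy)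
      calc ‖w t x‖ ≤ L * (a * θ ^ n) * duhamelGain H μ * Real.exp (μ * t) :=
            (hwS t ht x hx).trans (norm_duhamel_le hH hμ (by positivity) ht source_bound)
        _ = (L * duhamelGain H μ) * (a * θ ^ n * Real.exp (μ * t)) := by ring
        _ ≤ θ * (a * θ ^ n * Real.exp (μ * t)) := by gcongr
        _ = a * θ ^ (n + 1) * Real.exp (μ * t) := by ring
  have limit : Tendsto (fun n : ℕ => a * θ ^ n * Real.exp (μ * t)) atTop (𝓝 0) := by
    simpa using ((tendsto_pow_atTop_nhds_zero_of_lt_one hθ0 hθ).const_mul a).mul_const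
      (Real.exp (μ * t))
  exact norm_le_zero_iff.1 (ge_of_tendsto' limit fun n => geometric n t ht x hx)

theorem IsMildSolution.comp_isometry_eq (hu : IsMildSolution H Φ R u) (hH : 0 < H) (hμ : 0 ≤ μ)
    (hR : Continuous ↿R) (hu_cont : Continuous ↿u) (hu_bound : ExpBound μ a u) (hL : 0 ≤ L)
    (hR_lip : ∀ s, 0 ≤ s → ∀ y v w, ‖R s y v - R s y w‖ ≤ L * ‖v - w‖)
    (hLθ : L * duhamelGain H μ ≤ θ) (hθ : θ < 1) {e : E ≃ₗᵢ[ℝ] E}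
    (hΦe : ∀ t x, Φ t (e x) = Φ t x) (hRe : ∀ s y v, R s (e y) v = R s y v) (t : ℝ) (x : E) :
    u t (e x) = u t x := by
  have composed (t : ℝ) (x : E) : u t (e x) - u t x =
      duhamel H (fun s y => R s y (u s (e y)) - R s y (u s y)) (max t 0) x := by
    rw [duhamel_sub (by fun_prop) (by fun_prop), hu t (e x), hu t x, hΦe,
      ← duhamel_comp_isometry, add_sub_add_left_eq_sub]
    simp only [Function.comp_def, hRe]
  have diff_bound : ExpBound μ (a + a) fun t x => u t (e x) - u t x := fun t ht x =>
    (norm_sub_le_of_le (hu_bound t ht (e x)) (hu_bound t ht x)).trans_eq (by ring)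
  rw [hu.eq_max, ← sub_eq_zero]
  exact eq_zero_of_norm_le_duhamel (isPastClosed_univ H) hH hμ diff_bound hL
    (fun s hs y _ => hR_lip s hs y _ _)
    (fun t ht x _ => by simpa only [max_eq_left ht] using (congrArg norm (composed t x)).le)
    hLθ hθ (le_max_right t 0) (mem_univ _)

theorem IsMildSolution.eq_zero_of_lt_norm (hu : IsMildSolution H Φ R u) (hH : 0 < H)
    (hμ : 0 ≤ μ) (hu_bound : ExpBound μ a u) (hL : 0 ≤ L)
    (hR_lip : ∀ s, 0 ≤ s → ∀ y v w, ‖R s y v - R s y w‖ ≤ L * ‖v - w‖)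
    (hLθ : L * duhamelGain H μ ≤ θ) (hθ : θ < 1) {ρ : ℝ} (hΦ : ∀ t x, ρ < ‖x‖ → Φ t x = 0)
    (hR : ∀ s y, ρ < ‖y‖ → R s y 0 = 0) {t : ℝ} (ht : 0 ≤ t) {x : E}
    (hx : ρ + conformalLag H t 0 < ‖x‖) : u t x = 0 := by
  have outside {t : ℝ} (ht : 0 ≤ t) {x : E} (hx : ρ + conformalLag H t 0 < ‖x‖) : ρ < ‖x‖ := by
    linarith [conformalLag_nonneg hH ht]
  refine eq_zero_of_norm_le_duhamel (isPastClosed_lightCone_compl H ρ) hH hμ hu_bound hL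
    (S := fun s y => R s y (u s y)) (fun s hs y hy => ?_) (fun t ht x hx => ?_) hLθ hθ ht hx
  · simpa only [hR s y (outside hs hy), sub_zero] using hR_lip s hs y (u s y) 0
  · rw [hu.eq_of_nonneg ht, hΦ t x (outside ht hx), zero_add]

end Uniqueness

/-! ### Spatial regularity of mild solutions -/

section Regularity

section Chain

variable {E F : Type*} [NormedAddCommGroup E] [NormedSpace ℝ E] [NormedAddCommGroup F]
  [NormedSpace ℝ F]

/-- The nonlinearity `R s y v` has partial derivatives `Ry` in `y` and `Rv` in `v`, and all three
are jointly continuous. -/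
structure HasPartialFDerivs (R : ℝ → E → F → F) (Ry : ℝ → E → F → E →L[ℝ] F)
    (Rv : ℝ → E → F → F →L[ℝ] F) : Prop where
  continuous : Continuous ↿R
  continuous_left : Continuous ↿Ry
  continuous_right : Continuous ↿Rv
  hasFDerivAt : ∀ s y v,
    HasFDerivAt (fun p : E × F => R s p.1 p.2) ((Ry s y v).coprod (Rv s y v)) (y, v)

variable {R : ℝ → E → F → F} {Ry : ℝ → E → F → E →L[ℝ] F} {Rv : ℝ → E → F → F →L[ℝ] F}

lemma HasPartialFDerivs.comp {u : ℝ → E → F} {u' : ℝ → E → E →L[ℝ] F}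
    (hR : HasPartialFDerivs R Ry Rv) (hu : HasSpatialFDeriv u u') :
    HasSpatialFDeriv (fun s y => R s y (u s y))
      (fun s y => Ry s y (u s y) + (Rv s y (u s y)).comp (u' s y)) := by
  have := hR.continuous
  have := hR.continuous_left
  have := hR.continuous_right
  have := hu.continuous
  have := hu.continuous_fderiv
  refine ⟨by fun_prop, by fun_prop, fun s y => ?_⟩
  refine ((hR.hasFDerivAt s y (u s y)).comp y
    ((hasFDerivAt_id y).prodMk (hu.hasFDerivAt s y))).congr_fderiv ?_
  ext w
  simp

lemma HasPartialFDerivs.norm_right_le {L : ℝ} {s : ℝ} (hR : HasPartialFDerivs R Ry Rv)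
    (hL : 0 ≤ L) (hR_lip : ∀ y v w, ‖R s y v - R s y w‖ ≤ L * ‖v - w‖) (y : E) (v : F) :
    ‖Rv s y v‖ ≤ L := by
  have : HasFDerivAt (R s y) (Rv s y v) v := by
    refine ((hR.hasFDerivAt s y v).comp v (hasFDerivAt_prodMk_right y v)).congr_fderiv ?_
    ext w
    simp
  exact this.le_of_lip' hL (.of_forall fun w => hR_lip y w v)

variable {μ ν L B a b : ℝ} {u : ℝ → E → F} {W : ℝ → E → E →L[ℝ] F}

lemma HasPartialFDerivs.expBound_linearization_sub (hR : HasPartialFDerivs R Ry Rv) (hL : 0 ≤ L)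
    (hR_lip : ∀ s, 0 ≤ s → ∀ y v w, ‖R s y v - R s y w‖ ≤ L * ‖v - w‖)
    (hR'_lip : ∀ s, 0 ≤ s → ∀ y v, ‖(Ry s y v + (Rv s y v).comp (W s y)) -
      (Ry s y (u s y) + (Rv s y (u s y)).comp (W s y))‖ ≤ B * Real.exp (ν * s) * ‖v - u s y‖)
    (hB : 0 ≤ B) {v : ℝ → E → F} {V : ℝ → E → E →L[ℝ] F}
    (hv : ExpBound μ a fun t x => v t x - u t x)
    (hV : ExpBound (μ + ν) b fun t x => V t x - W t x) :
    ExpBound (μ + ν) (L * b + B * a) fun s y =>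
      Ry s y (v s y) + (Rv s y (v s y)).comp (V s y) -
        (Ry s y (u s y) + (Rv s y (u s y)).comp (W s y)) := fun s hs y =>
  calc _ = ‖(Rv s y (v s y)).comp (V s y - W s y) + (Ry s y (v s y) +
          (Rv s y (v s y)).comp (W s y) - (Ry s y (u s y) + (Rv s y (u s y)).comp (W s y)))‖ := by
        rw [ContinuousLinearMap.comp_sub]
        congr 1
        module
    _ ≤ L * (b * Real.exp ((μ + ν) * s)) + B * Real.exp (ν * s) * (a * Real.exp (μ * s)) := by
        refine norm_add_le_of_le ((ContinuousLinearMap.opNorm_comp_le _ _).trans ?_)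
          ((hR'_lip s hs y _).trans ?_)
        · gcongr
          · exact hR.norm_right_le hL (hR_lip s hs) y _
          · exact hV s hs y
        · gcongr
          exact hv s hs y
    _ = (L * b + B * a) * Real.exp ((μ + ν) * s) := by
        rw [add_mul μ, Real.exp_add]
        ring

end Chain

variable {E : Type*} [NormedAddCommGroup E] [InnerProductSpace ℝ E] [FiniteDimensional ℝ E]
  [MeasurableSpace E] [BorelSpace E] [Nontrivial E] {F : Type*} [NormedAddCommGroup F]
  [NormedSpace ℝ F] {H μ ν L B θ a b : ℝ} {Φ : ℝ → E → F} {Φ' : ℝ → E → E →L[ℝ] F}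
  {R : ℝ → E → F → F} {Ry : ℝ → E → F → E →L[ℝ] F} {Rv : ℝ → E → F → F →L[ℝ] F}
  {u : ℝ → E → F} {W : ℝ → E → E →L[ℝ] F}

lemma HasPartialFDerivs.exists_picard_step (hR : HasPartialFDerivs R Ry Rv)
    (hu : IsMildSolution H Φ R u)
    (hW : IsMildSolution H Φ' (fun s y w => Ry s y (u s y) + (Rv s y (u s y)).comp w) W)
    (hu_cont : Continuous ↿u) (hW_cont : Continuous ↿W) (hH : 0 < H) (hμ : 0 ≤ μ) (hν : 0 ≤ ν)
    (hΦ : HasSpatialFDeriv Φ Φ') (hL : 0 ≤ L)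
    (hR_lip : ∀ s, 0 ≤ s → ∀ y v w, ‖R s y v - R s y w‖ ≤ L * ‖v - w‖)
    (hR'_lip : ∀ s, 0 ≤ s → ∀ y v, ‖(Ry s y v + (Rv s y v).comp (W s y)) -
      (Ry s y (u s y) + (Rv s y (u s y)).comp (W s y))‖ ≤ B * Real.exp (ν * s) * ‖v - u s y‖)
    (hB : 0 ≤ B) (hLθ : L * duhamelGain H μ ≤ θ) {v : ℝ → E → F} {V : ℝ → E → E →L[ℝ] F}
    (hvV : HasSpatialFDeriv v V) (hv : ExpBound μ a fun t x => v t x - u t x)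
    (hV : ExpBound (μ + ν) b fun t x => V t x - W t x) :
    ∃ v₁ V₁, HasSpatialFDeriv v₁ V₁ ∧ ExpBound μ (θ * a) (fun t x => v₁ t x - u t x) ∧
      ExpBound (μ + ν) (θ * b + duhamelGain H μ * B * a) fun t x => V₁ t x - W t x := by
  have hRv := hR.comp hvV
  have source_continuous :
      Continuous ↿fun s y => Ry s y (u s y) + (Rv s y (u s y)).comp (W s y) := by
    have := hR.continuous_left
    have := hR.continuous_right
    fun_prop
  have source_bound := hR.expBound_linearization_sub hL hR_lip hR'_lip hB hv hV
  have gain_le := duhamelGain_anti hH hμ (le_add_of_nonneg_right hν : μ ≤ μ + ν)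
  have gain : (L * b + B * a) * duhamelGain H (μ + ν) ≤ θ * b + duhamelGain H μ * B * a := by
    have hb := hV.nonneg
    have ha := hv.nonneg
    calc _ ≤ (L * b + B * a) * duhamelGain H μ := by gcongr
      _ = L * duhamelGain H μ * b + duhamelGain H μ * B * a := by ring
      _ ≤ _ := by gcongr
  refine ⟨fun t x => Φ t x + duhamel H (fun s y => R s y (v s y)) t x,
    fun t x => Φ' t x + duhamel H (fun s y => Ry s y (v s y) + (Rv s y (v s y)).comp (V s y)) t x,
    hΦ.add (hRv.duhamel H), fun t ht x => ?_, fun t ht x => ?_⟩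
  · beta_reduce
    rw [hu.eq_of_nonneg ht, add_sub_add_left_eq_sub]
    exact expBound_duhamel_sub_duhamel hv hH hμ hR.continuous hvV.continuous hu_cont hL hR_lip hLθ
      t ht x
  · beta_reduce
    rw [hW.eq_of_nonneg ht, add_sub_add_left_eq_sub,
      ← duhamel_sub hRv.continuous_fderiv source_continuous]
    exact (source_bound.duhamel hH (by positivity)).mono le_rfl gain t ht x

theorem HasPartialFDerivs.hasSpatialFDeriv_of_isMildSolution (hR : HasPartialFDerivs R Ry Rv)
    (hu : IsMildSolution H Φ R u)
    (hW : IsMildSolution H Φ' (fun s y w => Ry s y (u s y) + (Rv s y (u s y)).comp w) W)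
    (hu_cont : Continuous ↿u) (hW_cont : Continuous ↿W) (hu_bound : ExpBound μ a u)
    (hW_bound : ExpBound (μ + ν) b W) (hH : 0 < H) (hμ : 0 ≤ μ) (hν : 0 ≤ ν)
    (hΦ : HasSpatialFDeriv Φ Φ') (hL : 0 ≤ L)
    (hR_lip : ∀ s, 0 ≤ s → ∀ y v w, ‖R s y v - R s y w‖ ≤ L * ‖v - w‖)
    (hR'_lip : ∀ s, 0 ≤ s → ∀ y v, ‖(Ry s y v + (Rv s y v).comp (W s y)) -
      (Ry s y (u s y) + (Rv s y (u s y)).comp (W s y))‖ ≤ B * Real.exp (ν * s) * ‖v - u s y‖)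
    (hB : 0 ≤ B) (hLθ : L * duhamelGain H μ ≤ θ) (hθ0 : 0 < θ) (hθ : θ < 1) :
    HasSpatialFDeriv u W := by
  set D := duhamelGain H μ * B * a / θ with hD
  have approximations (n : ℕ) : ∃ v V, HasSpatialFDeriv v V ∧
      ExpBound μ (a * θ ^ n) (fun t x => v t x - u t x) ∧
      ExpBound (μ + ν) ((b + n * D) * θ ^ n) fun t x => V t x - W t x := by
    induction n with
    | zero =>
      refine ⟨fun _ _ => 0, fun _ _ => 0,
        ⟨by fun_prop, by fun_prop, fun _ _ => hasFDerivAt_const _ _⟩, ?_, ?_⟩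
      · simpa [ExpBound] using hu_bound
      · simpa [ExpBound] using hW_bound
    | succ n ih =>
      obtain ⟨v, V, hvV, hv, hV⟩ := ih
      obtain ⟨v₁, V₁, hvV₁, hv₁, hV₁⟩ := hR.exists_picard_step hu hW hu_cont hW_cont hH hμ hν hΦ hL
        hR_lip hR'_lip hB hLθ hvV hv hV
      refine ⟨v₁, V₁, hvV₁, ?_, ?_⟩
      · convert hv₁ using 1
        ring
      · convert hV₁ using 1
        rw [hD]
        push_cast
        field_simp
        ring
  choose v V hvV hv hV using approximations
  have a_lim : Tendsto (fun n : ℕ => a * θ ^ n) atTop (𝓝 0) := by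
    simpa using (tendsto_pow_atTop_nhds_zero_of_lt_one hθ0.le hθ).const_mul a
  have b_lim : Tendsto (fun n : ℕ => (b + n * D) * θ ^ n) atTop (𝓝 0) := by
    have := (tendsto_self_mul_const_pow_of_lt_one hθ0.le hθ).const_mul D
    simpa [add_mul, mul_assoc, mul_left_comm] using
      ((tendsto_pow_atTop_nhds_zero_of_lt_one hθ0.le hθ).const_mul b).add this
  refine ⟨hu_cont, hW_cont, fun t => ?_⟩
  rw [hu.eq_max, hW.eq_max]
  exact hasFDerivAt_of_tendstoUniformly (ExpBound.tendstoUniformly hV b_lim (le_max_right t 0))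
    (fun n => (hvV n).hasFDerivAt (max t 0))
    (ExpBound.tendstoUniformly hv a_lim (le_max_right t 0)).tendsto_at

end Regularity

/-! ### Twice differentiable mild solutions of the semilinear equation -/

section SemilinearRegularity

variable {E : Type*} [NormedAddCommGroup E]

section Sources

variable [NormedSpace ℝ E] {S : ℝ → E → ℝ} {S' : ℝ → E → E →L[ℝ] ℝ}
  {S'' : ℝ → E → E →L[ℝ] E →L[ℝ] ℝ} {q q' q'' : ℝ → ℝ} {u : ℝ → E → ℝ} {u' : ℝ → E → E →L[ℝ] ℝ}

/-- `u` is twice differentiable in space, with derivatives `u'` and `u''`, and `c` bounds all three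
at nonnegative times. -/
structure SpatialC2Bound (c : ℝ) (u : ℝ → E → ℝ) (u' : ℝ → E → E →L[ℝ] ℝ)
    (u'' : ℝ → E → E →L[ℝ] E →L[ℝ] ℝ) : Prop where
  fderiv : HasSpatialFDeriv u u'
  fderiv₂ : HasSpatialFDeriv u' u''
  bound : ExpBound 0 c u
  bound_fderiv : ExpBound 0 c u'
  bound_fderiv₂ : ExpBound 0 c u''

lemma hasPartialFDerivs_source_add (hS : HasSpatialFDeriv S S') (hq : ∀ v, HasDerivAt q (q' v) v)
    (hq' : Continuous q') :
    HasPartialFDerivs (fun s y v => S s y + q v) (fun s y _ => S' s y)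
      (fun _ _ v => q' v • ContinuousLinearMap.id ℝ ℝ) where
  continuous := by
    have := hS.continuous
    have : Continuous q := continuous_iff_continuousAt.2 fun v => (hq v).continuousAt
    fun_prop
  continuous_left := by
    have := hS.continuous_fderiv
    fun_prop
  continuous_right := by fun_prop
  hasFDerivAt s y v := by
    refine (((hS.hasFDerivAt s y).comp (y, v) hasFDerivAt_fst).add
      ((hq v).hasFDerivAt.comp (y, v) hasFDerivAt_snd)).congr_fderiv ?_
    ext <;> simp

lemma hasPartialFDerivs_linearized_source (hS' : HasSpatialFDeriv S' S'')
    (hu : HasSpatialFDeriv u u') (hq' : ∀ v, HasDerivAt q' (q'' v) v) (hq'' : Continuous q'') :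
    HasPartialFDerivs
      (fun s y w => S' s y + (q' (u s y) • ContinuousLinearMap.id ℝ ℝ).comp w)
      (fun s y w => S'' s y + (q'' (u s y) • u' s y).smulRight w)
      (fun s y _ => q' (u s y) • ContinuousLinearMap.id ℝ (E →L[ℝ] ℝ)) where
  continuous := by
    have := hS'.continuous
    have := hu.continuous
    have : Continuous q' := continuous_iff_continuousAt.2 fun v => (hq' v).continuousAt
    fun_prop
  continuous_left := by
    have := hu.continuous
    have := hu.continuous_fderiv
    exact (hS'.continuous_fderiv.comp (continuous_fst.prodMk continuous_snd.fst)).add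
      ((ContinuousLinearMap.smulRightL ℝ E (E →L[ℝ] ℝ)).continuous₂.comp
        ((by fun_prop : Continuous fun p : ℝ × E × (E →L[ℝ] ℝ) =>
          q'' (u p.1 p.2.1) • u' p.1 p.2.1).prodMk continuous_snd.snd))
  continuous_right := by
    have := hu.continuous
    have : Continuous q' := continuous_iff_continuousAt.2 fun v => (hq' v).continuousAt
    fun_prop
  hasFDerivAt s y w := by
    have fst : HasFDerivAt (fun p : E × (E →L[ℝ] ℝ) => p.1) (.fst ℝ E _) (y, w) := hasFDerivAt_fst
    have snd : HasFDerivAt (fun p : E × (E →L[ℝ] ℝ) => p.2) (.snd ℝ E _) (y, w) := hasFDerivAt_snd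
    have coefficient := (hq' (u s y)).comp_hasFDerivAt y (hu.hasFDerivAt s y)
    refine ((HasFDerivAt.comp (y, w) (hS'.hasFDerivAt s y) fst).add
      ((HasFDerivAt.comp (y, w) coefficient fst).smul snd)).congr_fderiv ?_
    ext <;> simp

lemma norm_smul_smulRight_le {F : Type*} [NormedAddCommGroup F] [NormedSpace ℝ F] {p a B : ℝ}
    {ℓ : E →L[ℝ] ℝ} (hp : ‖p‖ ≤ B) (hℓ : ‖ℓ‖ ≤ a) (w : F) :
    ‖(p • ℓ).smulRight w‖ ≤ B * a * ‖w‖ := by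
  rw [ContinuousLinearMap.norm_smulRight_apply, norm_smul]
  gcongr
  exact (norm_nonneg _).trans hp

lemma expBound_add_smul_smulRight {μ c a B : ℝ} {p : ℝ → E → ℝ} (hS : ExpBound (2 * μ) c S'')
    (hu' : ExpBound μ a u') (hp : ∀ s y, ‖p s y‖ ≤ B) :
    ExpBound (2 * μ) (c + B * a ^ 2) fun s y =>
      S'' s y + (p s y • u' s y).smulRight (u' s y) := fun s hs y => by
  have hB : 0 ≤ B := (norm_nonneg _).trans (hp s y)
  have ha := hu'.nonneg
  calc _ ≤ c * Real.exp (2 * μ * s) + B * (a * Real.exp (μ * s)) * (a * Real.exp (μ * s)) := by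
        refine (norm_add_le _ _).trans (add_le_add (hS s hs y)
          ((norm_smul_smulRight_le (hp s y) (hu' s hs y) _).trans ?_))
        gcongr
        exact hu' s hs y
    _ = _ := by
        rw [mul_assoc 2, two_mul, Real.exp_add]
        ring

end Sources

variable [InnerProductSpace ℝ E] [FiniteDimensional ℝ E] [MeasurableSpace E] [BorelSpace E]
  [Nontrivial E] {H μ L B θ c : ℝ}

lemma HasPartialFDerivs.exists_isMildSolution_linearized {F : Type*} [NormedAddCommGroup F]
    [NormedSpace ℝ F] [CompleteSpace F] {Φ' : ℝ → E → E →L[ℝ] F} {R : ℝ → E → F → F}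
    {Ry : ℝ → E → F → E →L[ℝ] F} {Rv : ℝ → E → F → F →L[ℝ] F} {u : ℝ → E → F} {c₀ : ℝ}
    (hR : HasPartialFDerivs R Ry Rv)
    (hH : 0 < H) (hμ : 0 ≤ μ) (hu : Continuous ↿u) (hΦ' : Continuous ↿Φ')
    (hΦ'_bound : ExpBound μ c Φ') (hRy_bound : ExpBound μ c₀ fun s y => Ry s y (u s y))
    (hL : 0 ≤ L) (hR_lip : ∀ s, 0 ≤ s → ∀ y v w, ‖R s y v - R s y w‖ ≤ L * ‖v - w‖)
    (hLθ : L * duhamelGain H μ ≤ θ) (hθ : θ < 1) :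
    ∃ W, Continuous ↿W ∧
      IsMildSolution H Φ' (fun s y w => Ry s y (u s y) + (Rv s y (u s y)).comp w) W ∧
      ExpBound μ (mildBound H μ θ c c₀) W := by
  have := hR.continuous_left
  have := hR.continuous_right
  refine exists_isMildSolution hH hμ hΦ' (by fun_prop) hΦ'_bound (by simpa using hRy_bound) hL
    (fun s hs y w w' => ?_) hLθ hθ
  rw [add_sub_add_left_eq_sub, ← ContinuousLinearMap.comp_sub]
  refine (ContinuousLinearMap.opNorm_comp_le _ _).trans ?_
  gcongr
  exact hR.norm_right_le hL (hR_lip s hs) y _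

variable {Φ S : ℝ → E → ℝ} {Φ' S' : ℝ → E → E →L[ℝ] ℝ} {Φ'' S'' : ℝ → E → E →L[ℝ] E →L[ℝ] ℝ}
  {q q' q'' : ℝ → ℝ}

lemma exists_isMildSolution_hasSpatialFDeriv (hH : 0 < H) (hμ : 0 ≤ μ)
    (hΦ : SpatialC2Bound c Φ Φ' Φ'') (hS : SpatialC2Bound c S S' S'')
    (hq : ∀ v, HasDerivAt q (q' v) v) (hq' : ∀ v, HasDerivAt q' (q'' v) v) (hq0 : q 0 = 0)
    (hq'_bound : ∀ v, ‖q' v‖ ≤ L) (hq''_bound : ∀ v, ‖q'' v‖ ≤ B)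
    (hLθ : L * duhamelGain H μ ≤ θ) (hθ0 : 0 < θ) (hθ : θ < 1) :
    ∃ u u', HasSpatialFDeriv u u' ∧ IsMildSolution H Φ (fun s y v => S s y + q v) u ∧
      IsMildSolution H Φ'
        (fun s y w => S' s y + (q' (u s y) • ContinuousLinearMap.id ℝ ℝ).comp w) u' ∧
      ExpBound μ (mildBound H μ θ c c) u ∧ ExpBound μ (mildBound H μ θ c c) u' := by
  have hL : 0 ≤ L := (norm_nonneg _).trans (hq'_bound 0)
  have hB : 0 ≤ B := (norm_nonneg _).trans (hq''_bound 0)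
  have hR := hasPartialFDerivs_source_add hS.fderiv hq
    (continuous_iff_continuousAt.2 fun v => (hq' v).continuousAt)
  have hR_lip (s : ℝ) (_ : 0 ≤ s) (y : E) (v w : ℝ) :
      ‖(S s y + q v) - (S s y + q w)‖ ≤ L * ‖v - w‖ := by
    rw [add_sub_add_left_eq_sub]
    exact convex_univ.norm_image_sub_le_of_norm_hasDerivWithin_le
      (fun x _ => (hq x).hasDerivWithinAt) (fun x _ => hq'_bound x) (mem_univ w) (mem_univ v)
  obtain ⟨u, hu_cont, hu, hu_bound⟩ := exists_isMildSolution hH hμ hΦ.fderiv.continuous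
    hR.continuous (hΦ.bound.mono hμ le_rfl)
    (by simpa only [hq0, add_zero] using hS.bound.mono hμ le_rfl) hL hR_lip hLθ hθ
  obtain ⟨u', hu'_cont, hu', hu'_bound⟩ := hR.exists_isMildSolution_linearized hH hμ hu_cont
    hΦ.fderiv.continuous_fderiv (hΦ.bound_fderiv.mono hμ le_rfl)
    (hS.bound_fderiv.mono hμ le_rfl) hL hR_lip hLθ hθ
  refine ⟨u, u', hR.hasSpatialFDeriv_of_isMildSolution hu hu' hu_cont hu'_cont hu_bound
    (hu'_bound.mono (le_add_of_nonneg_right hμ) le_rfl) hH hμ hμ hΦ.fderiv hL hR_lip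
    (B := B * mildBound H μ θ c c) (fun s hs y v => ?_) (mul_nonneg hB hu'_bound.nonneg) hLθ hθ0 hθ,
    hu, hu', hu_bound, hu'_bound⟩
  have q'_lip : ‖q' v - q' (u s y)‖ ≤ B * ‖v - u s y‖ :=
    convex_univ.norm_image_sub_le_of_norm_hasDerivWithin_le
      (fun x _ => (hq' x).hasDerivWithinAt) (fun x _ => hq''_bound x) (mem_univ _) (mem_univ v)
  calc _ = ‖(q' v - q' (u s y)) • u' s y‖ := by
        simp [add_sub_add_left_eq_sub, sub_smul]
    _ ≤ B * ‖v - u s y‖ * (mildBound H μ θ c c * Real.exp (μ * s)) := by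
        rw [norm_smul]
        gcongr
        exact hu'_bound s hs y
    _ = _ := by ring

theorem exists_isMildSolution_C2 (hH : 0 < H) (hμ : 0 ≤ μ)
    (hΦ : SpatialC2Bound c Φ Φ' Φ'') (hS : SpatialC2Bound c S S' S'')
    (hq : ∀ v, HasDerivAt q (q' v) v) (hq' : ∀ v, HasDerivAt q' (q'' v) v) (hq'' : Continuous q'')
    (hq0 : q 0 = 0) (hq'_bound : ∀ v, ‖q' v‖ ≤ L) (hq''_bound : ∀ v, ‖q'' v‖ ≤ B)
    (hLθ : L * duhamelGain H μ ≤ θ) (hθ0 : 0 < θ) (hθ : θ < 1) :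
    ∃ u u' u'', HasSpatialFDeriv u u' ∧ HasSpatialFDeriv u' u'' ∧
      IsMildSolution H Φ (fun s y v => S s y + q v) u ∧ ExpBound μ (mildBound H μ θ c c) u ∧
      ExpBound (2 * μ) (mildBound H (2 * μ) θ c (c + B * mildBound H μ θ c c ^ 2)) u'' := by
  have hL : 0 ≤ L := (norm_nonneg _).trans (hq'_bound 0)
  have hB : 0 ≤ B := (norm_nonneg _).trans (hq''_bound 0)
  obtain ⟨u, u', huu', hu, hu', hu_bound, hu'_bound⟩ :=
    exists_isMildSolution_hasSpatialFDeriv hH hμ hΦ hS hq hq' hq0 hq'_bound hq''_bound hLθ hθ0 hθ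
  set a := mildBound H μ θ c c
  have hR := hasPartialFDerivs_linearized_source hS.fderiv₂ huu' hq' hq''
  have hR_lip (s : ℝ) (_ : 0 ≤ s) (y : E) (w w' : E →L[ℝ] ℝ) :
      ‖(S' s y + (q' (u s y) • ContinuousLinearMap.id ℝ ℝ).comp w) -
        (S' s y + (q' (u s y) • ContinuousLinearMap.id ℝ ℝ).comp w')‖ ≤ L * ‖w - w'‖ := by
    rw [add_sub_add_left_eq_sub, ← ContinuousLinearMap.comp_sub, ContinuousLinearMap.smul_comp,
      ContinuousLinearMap.id_comp, norm_smul]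
    gcongr
    exact hq'_bound _
  have rank_one_bound {s : ℝ} (hs : 0 ≤ s) (y : E) (w : E →L[ℝ] ℝ) :
      ‖(q'' (u s y) • u' s y).smulRight w‖ ≤ B * a * Real.exp (μ * s) * ‖w‖ := by
    rw [mul_assoc B]
    exact norm_smul_smulRight_le (hq''_bound _) (hu'_bound s hs y) w
  have source_bound := expBound_add_smul_smulRight
    (hS.bound_fderiv₂.mono (by positivity : 0 ≤ 2 * μ) le_rfl) hu'_bound
    (p := fun s y => q'' (u s y)) fun s y => hq''_bound _
  have hLθ₂ : L * duhamelGain H (2 * μ) ≤ θ := le_trans (by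
    gcongr
    exact duhamelGain_anti hH hμ (by linarith)) hLθ
  obtain ⟨u'', hu''_cont, hu'', hu''_bound⟩ := hR.exists_isMildSolution_linearized hH
    (by positivity : 0 ≤ 2 * μ) huu'.continuous_fderiv hΦ.fderiv₂.continuous_fderiv
    (hΦ.bound_fderiv₂.mono (by positivity) le_rfl) source_bound hL hR_lip hLθ₂ hθ
  refine ⟨u, u', u'', huu', hR.hasSpatialFDeriv_of_isMildSolution hu' hu''
    huu'.continuous_fderiv hu''_cont hu'_bound (hu''_bound.mono (two_mul μ).le le_rfl) hH hμ hμ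
    hΦ.fderiv₂ hL hR_lip (B := B * a) (fun s hs y w => ?_) (mul_nonneg hB hu'_bound.nonneg)
    hLθ hθ0 hθ, hu, hu_bound, hu''_bound⟩
  refine (congrArg norm ?_).trans_le (rank_one_bound hs y (w - u' s y))
  ext
  simp
  ring

end SemilinearRegularity

/-! ### The Laplacian of the initial data -/

section Laplacian

variable {u : E3 → ℝ} {u' : E3 → E3 →L[ℝ] ℝ} {u'' : E3 →L[ℝ] E3 →L[ℝ] ℝ} {x : E3}

lemma lap_eq_bilinearTrace (hu : ∀ x, HasFDerivAt u (u' x) x) (hu' : HasFDerivAt u' u'' x) :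
    lap u x = bilinearTrace (EuclideanSpace.basisFun (Fin 3) ℝ) u'' := by
  simp only [lap, bilinearTrace_apply, EuclideanSpace.basisFun_apply]
  refine Finset.sum_congr rfl fun i _ => ?_
  have hdir := hu'.clm_apply (hasFDerivAt_const (EuclideanSpace.single i (1 : ℝ)) x)
  rw [funext fun y => congrArg (· (EuclideanSpace.single i (1 : ℝ))) (hu y).fderiv, hdir.fderiv]
  simp

lemma lap_eq_bilinearTrace_fderiv (hu : ContDiff ℝ 2 u) (x : E3) :
    lap u x = bilinearTrace (EuclideanSpace.basisFun (Fin 3) ℝ) (fderiv ℝ (fderiv ℝ u) x) :=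
  lap_eq_bilinearTrace (fun y => (hu.differentiable two_ne_zero y).hasFDerivAt)
    ((hu.fderiv_right (m := 1) (by norm_num)).differentiable one_ne_zero x).hasFDerivAt

lemma lap_const_mul (ε : ℝ) (hu : ContDiff ℝ 2 u) (x : E3) :
    lap (fun y => ε * u y) x = ε * lap u x := by
  rw [lap_eq_bilinearTrace (fun y => (hu.differentiable two_ne_zero y).hasFDerivAt.const_mul ε)
      (((hu.fderiv_right (m := 1) (by norm_num)).differentiable one_ne_zero
        x).hasFDerivAt.const_smul ε),
    map_smul, ← lap_eq_bilinearTrace_fderiv hu, smul_eq_mul]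

open Laplacian InnerProductSpace in
lemma lap_comp_isometry (hu : ContDiff ℝ 2 u) (e : E3 ≃ₗᵢ[ℝ] E3) (x : E3) :
    lap (u ∘ e) x = lap u (e x) := by
  have lap_eq {v : E3 → ℝ} (hv : ContDiff ℝ 2 v) : lap v = Δ v := by
    ext y
    rw [lap_eq_bilinearTrace_fderiv hv, bilinearTrace_apply,
      laplacian_eq_iteratedFDeriv_orthonormalBasis v (EuclideanSpace.basisFun (Fin 3) ℝ)]
    simp [iteratedFDeriv_two_apply]
  rw [lap_eq hu, lap_eq (hu.comp e.contDiff),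
    laplacian_eq_iteratedFDeriv_orthonormalBasis _ (EuclideanSpace.basisFun (Fin 3) ℝ),
    laplacian_eq_iteratedFDeriv_orthonormalBasis u ((EuclideanSpace.basisFun (Fin 3) ℝ).map e)]
  refine Finset.sum_congr rfl fun i _ => ?_
  have chain : iteratedFDeriv ℝ 2 (u ∘ e) x =
      (iteratedFDeriv ℝ 2 u (e x)).compContinuousLinearMap fun _ => (e : E3 →L[ℝ] E3) :=
    (e : E3 →L[ℝ] E3).iteratedFDeriv_comp_right hu x (i := 2) le_rfl
  rw [chain, ContinuousMultilinearMap.compContinuousLinearMap_apply]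
  congr 1
  ext j
  fin_cases j <;> simp

lemma contDiff_lap {n : ℕ} (hu : ContDiff ℝ (n + 2) u) : ContDiff ℝ n (lap u) :=
  ContDiff.sum fun i _ => (((hu.fderiv_right (m := n + 1) (by rw [add_assoc]; norm_num)).clm_apply
    contDiff_const).fderiv_right le_rfl).clm_apply contDiff_const

lemma hasCompactSupport_lap (hu : HasCompactSupport u) : HasCompactSupport (lap u) := by
  have second (i : Fin 3) := (hu.fderiv_apply ℝ (EuclideanSpace.single i 1)).fderiv_apply ℝ
    (EuclideanSpace.single i (1 : ℝ))
  unfold lap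
  simp only [Fin.sum_univ_three]
  exact ((second 0).add (second 1)).add (second 2)

end Laplacian

section SpatialC2Bound

variable {E : Type*}

lemma ExpBound.add {F : Type*} [NormedAddCommGroup F] {μ c d : ℝ} {u v : ℝ → E → F}
    (hu : ExpBound μ c u) (hv : ExpBound μ d v) :
    ExpBound μ (c + d) fun t x => u t x + v t x := fun t ht x =>
  (norm_add_le_of_le (hu t ht x) (hv t ht x)).trans_eq (add_mul _ _ _).symm

variable [NormedAddCommGroup E]

section

variable {F : Type*} [NormedAddCommGroup F] [NormedSpace ℝ F] {a : ℝ → ℝ} {A : ℝ}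

lemma exists_expBound_smul (hA : ∀ t, 0 ≤ t → |a t| ≤ A) {v : E → F} (hv : Continuous v)
    (hv_supp : HasCompactSupport v) : ∃ c, ExpBound 0 c fun t x => a t • v x := by
  obtain ⟨c, hc⟩ := hv.bounded_above_of_compact_support hv_supp
  refine ⟨A * c, fun t ht x => ?_⟩
  have := (abs_nonneg _).trans (hA t ht)
  rw [zero_mul, Real.exp_zero, mul_one, norm_smul, Real.norm_eq_abs]
  gcongr
  exacts [hA t ht, hc x]

variable [NormedSpace ℝ E]

lemma exists_expBound_smul_fderiv (hA : ∀ t, 0 ≤ t → |a t| ≤ A) {v : E → F} (hv : ContDiff ℝ 1 v)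
    (hv_supp : HasCompactSupport v) : ∃ c, ExpBound 0 c fun t x => a t • fderiv ℝ v x :=
  exists_expBound_smul hA (hv.continuous_fderiv one_ne_zero) (hv_supp.fderiv ℝ)

end

variable [NormedSpace ℝ E]

lemma SpatialC2Bound.mono {c c' : ℝ} {u : ℝ → E → ℝ} {u' : ℝ → E → E →L[ℝ] ℝ}
    {u'' : ℝ → E → E →L[ℝ] E →L[ℝ] ℝ} (hu : SpatialC2Bound c u u' u'') (h : c ≤ c') :
    SpatialC2Bound c' u u' u'' where
  fderiv := hu.fderiv
  fderiv₂ := hu.fderiv₂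
  bound := hu.bound.mono le_rfl h
  bound_fderiv := hu.bound_fderiv.mono le_rfl h
  bound_fderiv₂ := hu.bound_fderiv₂.mono le_rfl h

lemma SpatialC2Bound.add {c d : ℝ} {u v : ℝ → E → ℝ} {u' v' : ℝ → E → E →L[ℝ] ℝ}
    {u'' v'' : ℝ → E → E →L[ℝ] E →L[ℝ] ℝ} (hu : SpatialC2Bound c u u' u'')
    (hv : SpatialC2Bound d v v' v'') :
    SpatialC2Bound (c + d) (fun t x => u t x + v t x) (fun t x => u' t x + v' t x)
      (fun t x => u'' t x + v'' t x) where
  fderiv := hu.fderiv.add hv.fderiv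
  fderiv₂ := hu.fderiv₂.add hv.fderiv₂
  bound := hu.bound.add hv.bound
  bound_fderiv := hu.bound_fderiv.add hv.bound_fderiv
  bound_fderiv₂ := hu.bound_fderiv₂.add hv.bound_fderiv₂

lemma exists_spatialC2Bound_mul {a : ℝ → ℝ} {A : ℝ} (ha : Continuous a)
    (hA : ∀ t, 0 ≤ t → |a t| ≤ A) {w : E → ℝ} (hw : ContDiff ℝ 2 w)
    (hw_supp : HasCompactSupport w) :
    ∃ c, SpatialC2Bound c (fun t x => a t * w x) (fun t x => a t • fderiv ℝ w x)
      (fun t x => a t • fderiv ℝ (fderiv ℝ w) x) := by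
  have hw' : ContDiff ℝ 1 (fderiv ℝ w) := hw.fderiv_right (by norm_num)
  obtain ⟨c₀, hc₀⟩ := exists_expBound_smul hA hw.continuous hw_supp
  obtain ⟨c₁, hc₁⟩ := exists_expBound_smul_fderiv hA (hw.of_le one_le_two) hw_supp
  obtain ⟨c₂, hc₂⟩ := exists_expBound_smul_fderiv hA hw' (hw_supp.fderiv ℝ)
  have := hw.continuous
  have := hw'.continuous
  have := hw'.continuous_fderiv one_ne_zero
  have hfderiv : HasSpatialFDeriv (fun t x => a t * w x) fun t x => a t • fderiv ℝ w x :=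
    ⟨by fun_prop, by fun_prop, fun t x =>
      (hw.differentiable two_ne_zero x).hasFDerivAt.const_mul (a t)⟩
  have hfderiv₂ : HasSpatialFDeriv (fun t x => a t • fderiv ℝ w x)
      fun t x => a t • fderiv ℝ (fderiv ℝ w) x :=
    ⟨by fun_prop, by fun_prop, fun t x =>
      (hw'.differentiable one_ne_zero x).hasFDerivAt.const_smul (a t)⟩
  exact ⟨max c₀ (max c₁ c₂), hfderiv, hfderiv₂, hc₀.mono le_rfl (le_max_left _ _),
    hc₁.mono le_rfl ((le_max_left _ _).trans (le_max_right _ _)),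
    hc₂.mono le_rfl ((le_max_right _ _).trans (le_max_right _ _))⟩

end SpatialC2Bound

/-! ### The Cauchy problem for the linear equation of mass `2H²` -/

section LinearCauchyProblem

/-- The function affine in conformal time with Cauchy data `(g, h)`. -/
def dataExtension (H : ℝ) (g h : E3 → ℝ) (t : ℝ) (x : E3) : ℝ :=
  g x + conformalLag H t 0 * h x

/-- Minus the value of the operator `∂ₜ² + 3H ∂ₜ + 2H² - e^{-2Ht} Δ` on `dataExtension H g h`. -/
def dataSource (H : ℝ) (g h : E3 → ℝ) (t : ℝ) (x : E3) : ℝ :=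
  Real.exp (-2 * H * t) * lap g x + Real.exp (-2 * H * t) * conformalLag H t 0 * lap h x
    + -(2 * H) * (H * g x + h x)

/-- The solution of `∂ₜ²φ + 3H ∂ₜφ + 2H²φ - e^{-2Ht} Δφ = S - dataSource H g h` with Cauchy data
`(g, h)`. -/
def cauchyDuhamel (H : ℝ) (g h : E3 → ℝ) (S : ℝ → E3 → ℝ) (t : ℝ) (x : E3) : ℝ :=
  dataExtension H g h t x + duhamel H S t x

variable {H : ℝ} {g h : E3 → ℝ}

lemma continuous_conformalLag_left (H s : ℝ) : Continuous fun t => conformalLag H t s := by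
  unfold conformalLag
  fun_prop

lemma conformalLag_zero_le (hH : 0 < H) (t : ℝ) : conformalLag H t 0 ≤ 1 / H := by
  unfold conformalLag
  gcongr
  simpa using (Real.exp_pos _).le

lemma abs_conformalLag_zero_le (hH : 0 < H) {t : ℝ} (ht : 0 ≤ t) :
    |conformalLag H t 0| ≤ 1 / H := by
  rw [abs_of_nonneg (conformalLag_nonneg hH ht)]
  exact conformalLag_zero_le hH t

lemma abs_exp_neg_two_mul_mul_le_one (hH : 0 < H) {t : ℝ} (ht : 0 ≤ t) :
    |Real.exp (-2 * H * t)| ≤ 1 := by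
  rw [Real.abs_exp, Real.exp_le_one_iff]
  have := mul_nonneg hH.le ht
  linarith

lemma exists_spatialC2Bound_dataExtension (hH : 0 < H) (hg : ContDiff ℝ 2 g)
    (hg_supp : HasCompactSupport g) (hh : ContDiff ℝ 2 h) (hh_supp : HasCompactSupport h) :
    ∃ c, SpatialC2Bound c (dataExtension H g h)
      (fun t x => fderiv ℝ g x + conformalLag H t 0 • fderiv ℝ h x)
      (fun t x => fderiv ℝ (fderiv ℝ g) x + conformalLag H t 0 • fderiv ℝ (fderiv ℝ h) x) := by
  obtain ⟨c, hc⟩ := exists_spatialC2Bound_mul (continuous_const (y := (1 : ℝ))) (fun _ _ => le_rfl)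
    hg hg_supp
  simp only [one_mul, one_smul] at hc
  obtain ⟨d, hd⟩ := exists_spatialC2Bound_mul (continuous_conformalLag_left H 0)
    (fun t => abs_conformalLag_zero_le hH) hh hh_supp
  exact ⟨c + d, hc.add hd⟩

lemma exists_spatialC2Bound_dataSource (hH : 0 < H) (hg : ContDiff ℝ 4 g)
    (hg_supp : HasCompactSupport g) (hh : ContDiff ℝ 4 h) (hh_supp : HasCompactSupport h) :
    ∃ c S' S'', SpatialC2Bound c (dataSource H g h) S' S'' := by
  have lag := continuous_conformalLag_left H 0
  obtain ⟨c, hc⟩ := exists_spatialC2Bound_mul (a := fun t => Real.exp (-2 * H * t)) (by fun_prop)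
    (fun t => abs_exp_neg_two_mul_mul_le_one hH) (contDiff_lap (n := 2) hg)
    (hasCompactSupport_lap hg_supp)
  obtain ⟨d, hd⟩ := exists_spatialC2Bound_mul
    (a := fun t => Real.exp (-2 * H * t) * conformalLag H t 0) (A := 1 * (1 / H)) (by fun_prop)
    (fun t ht => by
      rw [abs_mul]
      gcongr
      exacts [abs_exp_neg_two_mul_mul_le_one hH ht, abs_conformalLag_zero_le hH ht])
    (contDiff_lap (n := 2) hh) (hasCompactSupport_lap hh_supp)
  obtain ⟨k, hk⟩ := exists_spatialC2Bound_mul continuous_const (A := |-(2 * H)|)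
    (fun _ _ => le_rfl) ((contDiff_const.mul (hg.of_le (by norm_num))).add
      (hh.of_le (by norm_num))) ((hg_supp.mul_left (f := fun _ => H)).add hh_supp)
  exact ⟨_, _, _, (hc.add hd).add hk⟩

variable {S : ℝ → E3 → ℝ} {S' : ℝ → E3 → E3 →L[ℝ] ℝ} {S'' : ℝ → E3 → E3 →L[ℝ] E3 →L[ℝ] ℝ}

lemma contDiff_cauchyDuhamel (hH : H ≠ 0) (hg : ContDiff ℝ 2 g) (hh : ContDiff ℝ 2 h)
    (hS : HasSpatialFDeriv S S') (hS' : HasSpatialFDeriv S' S'') :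
    ContDiff ℝ 2 (Function.uncurry (cauchyDuhamel H g h S)) := by
  refine ContDiff.add ?_ (contDiff_two_duhamel (EuclideanSpace.basisFun (Fin 3) ℝ) hH hS hS')
  unfold dataExtension conformalLag
  fun_prop

lemma cauchyDuhamel_zero_time (x : E3) : cauchyDuhamel H g h S 0 x = g x := by
  simp [cauchyDuhamel, dataExtension, conformalLag_self, duhamel_zero_time]

lemma dt1_cauchyDuhamel (hH : H ≠ 0) (hS : HasSpatialFDeriv S S') (t : ℝ) (x : E3) :
    dt1 (cauchyDuhamel H g h S) t x = Real.exp (-H * t) * h x + duhamelVelocity H S S' t x :=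
  ((((hasDerivAt_conformalLag hH 0 t).mul_const (h x)).const_add (g x)).add
    (hasDerivAt_duhamel hH hS t x)).deriv

lemma dt1_cauchyDuhamel_zero_time (hH : H ≠ 0) (hS : HasSpatialFDeriv S S') (x : E3) :
    dt1 (cauchyDuhamel H g h S) 0 x = h x := by
  simp [dt1_cauchyDuhamel hH hS, duhamelVelocity_zero_time]

lemma dt2_cauchyDuhamel (hH : H ≠ 0) (hS : HasSpatialFDeriv S S') (hS' : HasSpatialFDeriv S' S'')
    (t : ℝ) (x : E3) :
    dt2 (cauchyDuhamel H g h S) t x = -H * Real.exp (-H * t) * h x +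
      (S t x - 3 * H * duhamelVelocity H S S' t x - 2 * H ^ 2 * duhamel H S t x +
        Real.exp (-2 * H * t) *
          bilinearTrace (EuclideanSpace.basisFun (Fin 3) ℝ) (duhamel H S'' t x)) := by
  simp only [dt2, dt1_cauchyDuhamel hH hS]
  exact (((hasDerivAt_exp_mul (-H) t).mul_const (h x)).add
    (hasDerivAt_duhamelVelocity (EuclideanSpace.basisFun (Fin 3) ℝ) hH hS hS' t x)).deriv

lemma lap_cauchyDuhamel (hg : ContDiff ℝ 2 g) (hh : ContDiff ℝ 2 h) (hS : HasSpatialFDeriv S S')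
    (hS' : HasSpatialFDeriv S' S'') (t : ℝ) (x : E3) :
    lap (cauchyDuhamel H g h S t) x = lap g x + conformalLag H t 0 * lap h x +
      bilinearTrace (EuclideanSpace.basisFun (Fin 3) ℝ) (duhamel H S'' t x) := by
  have first {v : E3 → ℝ} (hv : ContDiff ℝ 2 v) (y : E3) :=
    (hv.differentiable two_ne_zero y).hasFDerivAt
  have second {v : E3 → ℝ} (hv : ContDiff ℝ 2 v) :=
    ((hv.fderiv_right (m := 1) (by norm_num)).differentiable one_ne_zero x).hasFDerivAt
  rw [lap_eq_bilinearTrace (u := cauchyDuhamel H g h S t)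
    (fun y => ((first hg y).add ((first hh y).const_mul (conformalLag H t 0))).add
      ((hS.duhamel H).hasFDerivAt t y))
    (((second hg).add ((second hh).const_smul (conformalLag H t 0))).add
      ((hS'.duhamel H).hasFDerivAt t x))]
  simp only [map_add, map_smul, smul_eq_mul, lap_eq_bilinearTrace_fderiv hg,
    lap_eq_bilinearTrace_fderiv hh]

theorem cauchyDuhamel_equation (hH : H ≠ 0) (hg : ContDiff ℝ 2 g) (hh : ContDiff ℝ 2 h)
    (hS : HasSpatialFDeriv S S') (hS' : HasSpatialFDeriv S' S'') (t : ℝ) (x : E3) :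
    dt2 (cauchyDuhamel H g h S) t x + 3 * H * dt1 (cauchyDuhamel H g h S) t x -
      Real.exp (-2 * H * t) * lap (cauchyDuhamel H g h S t) x +
      2 * H ^ 2 * cauchyDuhamel H g h S t x = S t x - dataSource H g h t x := by
  rw [dt2_cauchyDuhamel hH hS hS', dt1_cauchyDuhamel hH hS, lap_cauchyDuhamel hg hh hS hS',
    cauchyDuhamel, dataExtension, dataSource]
  have lag : H * conformalLag H t 0 = 1 - Real.exp (-H * t) := by
    simp [conformalLag, mul_div_cancel₀ _ hH]
  linear_combination 2 * H * h x * lag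

lemma hasCompactSupport_cauchyDuhamel (hg : HasCompactSupport g) (hh : HasCompactSupport h)
    {ρ : ℝ} (hS : ∀ s y, ρ < ‖y‖ → S s y = 0) (t : ℝ) :
    HasCompactSupport (cauchyDuhamel H g h S t) := by
  have lag : Continuous fun s => conformalLag H t s := by
    unfold conformalLag
    fun_prop
  obtain ⟨r, hr⟩ := isCompact_uIcc.exists_bound_of_continuousOn (lag.continuousOn (s := uIcc 0 t))
  have duhamel_supp : HasCompactSupport (duhamel H S t) :=
    .intro (isCompact_closedBall 0 (ρ + r)) fun x hx => duhamel_eq_zero fun s hs y hy => by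
      have hyx : ‖x‖ - ‖y‖ ≤ |conformalLag H t s| := by
        simpa [mem_sphere_iff_norm.1 hy] using norm_sub_norm_le x y |>.trans_eq (norm_sub_rev x y)
      have := hr s hs
      rw [mem_closedBall_zero_iff, not_le] at hx
      exact hS s y (by rw [Real.norm_eq_abs] at this; linarith)
  exact (hg.add (hh.mul_left (f := fun _ => _))).add duhamel_supp

end LinearCauchyProblem

/-! ### Global solutions when the nonlinearity has small slope -/

section SmallSlope

/-- `φ` is a `C²` solution of the de Sitter Klein–Gordon equation for `t ≥ 0` with Cauchy data
`(g, h)`, compactly supported in space and invariant under every linear isometry that leaves the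
data invariant. -/
structure IsGlobalSolution (H : ℝ) (f : ℝ → ℝ) (g h : E3 → ℝ) (φ : ℝ → E3 → ℝ) : Prop where
  contDiff : ContDiff ℝ 2 (Function.uncurry φ)
  equation : ∀ t, 0 ≤ t → ∀ x,
    dt2 φ t x + 3 * H * dt1 φ t x - Real.exp (-2 * H * t) * lap (φ t) x + f (φ t x) = 0
  initial : ∀ x, φ 0 x = g x
  initial_velocity : ∀ x, dt1 φ 0 x = h x
  comp_isometry : ∀ e : E3 ≃ₗᵢ[ℝ] E3, g ∘ e = g → h ∘ e = h → ∀ t, φ t ∘ e = φ t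
  hasCompactSupport : ∀ t, HasCompactSupport (φ t)

/-- What remains of the nonlinearity once the mass term `2H²v` is moved to the left-hand side. -/
def massResidual (H : ℝ) (f : ℝ → ℝ) (v : ℝ) : ℝ := 2 * H ^ 2 * v - f v

variable {H : ℝ} {f : ℝ → ℝ}

lemma hasDerivAt_massResidual (hf : ContDiff ℝ 2 f) (v : ℝ) :
    HasDerivAt (massResidual H f) (2 * H ^ 2 - deriv f v) v :=
  ((hasDerivAt_const_mul (2 * H ^ 2)).sub
    (hf.differentiable two_ne_zero v).hasDerivAt)

lemma hasDerivAt_deriv_massResidual (hf : ContDiff ℝ 2 f) (v : ℝ) :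
    HasDerivAt (fun v => 2 * H ^ 2 - deriv f v) (-deriv (deriv f) v) v := by
  have hf' : ContDiff ℝ 1 (deriv f) := hf.deriv'
  exact (hf'.differentiable one_ne_zero v).hasDerivAt.const_sub _

lemma abs_deriv_massResidual_le (hf_slope : ∀ v, |deriv f v| ≤ H ^ 2 / 2) (v : ℝ) :
    ‖2 * H ^ 2 - deriv f v‖ ≤ 5 / 2 * H ^ 2 := by
  have := abs_le.1 (hf_slope v)
  rw [Real.norm_eq_abs, abs_le]
  constructor <;> nlinarith

lemma slope_mul_duhamelGain_le (hH : 0 < H) : 5 / 2 * H ^ 2 * duhamelGain H (H / 4) ≤ 8 / 9 := by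
  unfold duhamelGain
  field_simp
  norm_num

lemma abs_source_sub_source_le (hf : ContDiff ℝ 2 f) (hf_slope : ∀ v, |deriv f v| ≤ H ^ 2 / 2)
    (a v w : ℝ) :
    ‖(a + massResidual H f v) - (a + massResidual H f w)‖ ≤ 5 / 2 * H ^ 2 * ‖v - w‖ := by
  rw [add_sub_add_left_eq_sub]
  exact convex_univ.norm_image_sub_le_of_norm_hasDerivWithin_le
    (fun x _ => (hasDerivAt_massResidual hf x).hasDerivWithinAt)
    (fun x _ => abs_deriv_massResidual_le hf_slope x) (mem_univ w) (mem_univ v)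

variable {g h : E3 → ℝ} {u : ℝ → E3 → ℝ} {a : ℝ}

lemma exists_data_eq_zero_of_lt_norm (hg : HasCompactSupport g) (hh : HasCompactSupport h) :
    ∃ ρ, ∀ y, ρ < ‖y‖ → (g y = 0 ∧ h y = 0) ∧ lap g y = 0 ∧ lap h y = 0 := by
  have data_supp := (hg.isCompact.union hh.isCompact).union
    ((hasCompactSupport_lap hg).isCompact.union (hasCompactSupport_lap hh).isCompact)
  obtain ⟨ρ, hρ⟩ := data_supp.isBounded.subset_closedBall 0
  refine ⟨ρ, fun y hy => ?_⟩
  have hy_supp := notMem_subset hρ (by simpa using hy : y ∉ closedBall 0 ρ)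
  rw [mem_union, mem_union, mem_union, not_or, not_or, not_or] at hy_supp
  exact hy_supp.imp (And.imp image_eq_zero_of_notMem_tsupport image_eq_zero_of_notMem_tsupport)
    (And.imp image_eq_zero_of_notMem_tsupport image_eq_zero_of_notMem_tsupport)

lemma IsMildSolution.exists_source_eq_zero_of_lt_norm
    (hu : IsMildSolution H (dataExtension H g h)
      (fun s y v => dataSource H g h s y + massResidual H f v) u) (hH : 0 < H)
    (hu_bound : ExpBound (H / 4) a u) (hf : ContDiff ℝ 2 f) (hf0 : f 0 = 0)
    (hf_slope : ∀ v, |deriv f v| ≤ H ^ 2 / 2) (hg : HasCompactSupport g)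
    (hh : HasCompactSupport h) :
    ∃ ρ, ∀ s y, ρ < ‖y‖ → dataSource H g h s y + massResidual H f (u s y) = 0 := by
  obtain ⟨ρ, outside⟩ := exists_data_eq_zero_of_lt_norm hg hh
  have extension_zero (t : ℝ) (y : E3) (hy : ρ < ‖y‖) : dataExtension H g h t y = 0 := by
    simp [dataExtension, outside y hy]
  have source_zero (s : ℝ) (y : E3) (hy : ρ < ‖y‖) : dataSource H g h s y = 0 := by
    simp [dataSource, outside y hy]
  have residual_zero : massResidual H f 0 = 0 := by simp [massResidual, hf0]
  refine ⟨ρ + 1 / H, fun s y hy => ?_⟩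
  have hy' : ρ < ‖y‖ := by linarith [one_div_pos.2 hH]
  have u_zero : u (max s 0) y = 0 := hu.eq_zero_of_lt_norm hH (by positivity) hu_bound
    (by positivity) (fun s _ y => abs_source_sub_source_le hf hf_slope _)
    (slope_mul_duhamelGain_le hH) (by norm_num) extension_zero
    (fun s y hy => by rw [source_zero s y hy, residual_zero, add_zero]) (le_max_right s 0)
    (by linarith [conformalLag_zero_le hH (max s 0)])
  rw [hu.eq_max s, u_zero, source_zero s y hy', residual_zero, add_zero]

lemma IsMildSolution.source_comp_isometry
    (hu : IsMildSolution H (dataExtension H g h)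
      (fun s y v => dataSource H g h s y + massResidual H f v) u) (hH : 0 < H)
    (hsource : Continuous ↿(dataSource H g h)) (hu_cont : Continuous ↿u)
    (hu_bound : ExpBound (H / 4) a u) (hf : ContDiff ℝ 2 f)
    (hf_slope : ∀ v, |deriv f v| ≤ H ^ 2 / 2) (hg : ContDiff ℝ 2 g) (hh : ContDiff ℝ 2 h)
    {e : E3 ≃ₗᵢ[ℝ] E3} (hge : g ∘ e = g) (hhe : h ∘ e = h) (s : ℝ) (y : E3) :
    dataSource H g h s (e y) + massResidual H f (u s (e y)) =
      dataSource H g h s y + massResidual H f (u s y) := by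
  have source_comp (s : ℝ) (y : E3) : dataSource H g h s (e y) = dataSource H g h s y := by
    simp only [dataSource, ← lap_comp_isometry hg, ← lap_comp_isometry hh, hge, hhe,
      ← Function.comp_apply (f := g), ← Function.comp_apply (f := h)]
  have : Continuous (massResidual H f) :=
    continuous_iff_continuousAt.2 fun v => (hasDerivAt_massResidual hf v).continuousAt
  rw [source_comp, hu.comp_isometry_eq hH (by positivity) (by fun_prop) hu_cont hu_bound
    (by positivity) (fun s _ y => abs_source_sub_source_le hf hf_slope _)
    (slope_mul_duhamelGain_le hH) (by norm_num) (fun t x => ?_) fun s y v => by rw [source_comp]]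
  simp only [dataExtension, ← Function.comp_apply (f := g), ← Function.comp_apply (f := h), hge,
    hhe]

theorem IsMildSolution.isGlobalSolution_cauchyDuhamel
    (hu : IsMildSolution H (dataExtension H g h)
      (fun s y v => dataSource H g h s y + massResidual H f v) u) (hH : 0 < H)
    {u' : ℝ → E3 → E3 →L[ℝ] ℝ} {u'' : ℝ → E3 → E3 →L[ℝ] E3 →L[ℝ] ℝ} (hu' : HasSpatialFDeriv u u')
    (hu'' : HasSpatialFDeriv u' u'') (hu_bound : ExpBound (H / 4) a u) (hf : ContDiff ℝ 2 f)
    (hf0 : f 0 = 0) (hf_slope : ∀ v, |deriv f v| ≤ H ^ 2 / 2) (hg : ContDiff ℝ 4 g)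
    (hg_supp : HasCompactSupport g) (hh : ContDiff ℝ 4 h) (hh_supp : HasCompactSupport h) :
    IsGlobalSolution H f g h
      (cauchyDuhamel H g h fun s y => dataSource H g h s y + massResidual H f (u s y)) := by
  have hg₂ : ContDiff ℝ 2 g := hg.of_le (by norm_num)
  have hh₂ : ContDiff ℝ 2 h := hh.of_le (by norm_num)
  have hf'' : Continuous fun v => -deriv (deriv f) v :=
    (hf.deriv'.continuous_deriv le_rfl).neg
  obtain ⟨_, _, _, hsource⟩ := exists_spatialC2Bound_dataSource hH hg hg_supp hh hh_supp
  have hS := (hasPartialFDerivs_source_add hsource.fderiv (hasDerivAt_massResidual (H := H) hf)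
    (continuous_iff_continuousAt.2 fun v => (hasDerivAt_deriv_massResidual hf v).continuousAt)).comp
    hu'
  have hS' := (hasPartialFDerivs_linearized_source hsource.fderiv₂ hu'
    (hasDerivAt_deriv_massResidual (H := H) hf) hf'').comp hu''
  obtain ⟨ρ, hρ⟩ := hu.exists_source_eq_zero_of_lt_norm hH hu_bound hf hf0 hf_slope hg_supp hh_supp
  refine ⟨contDiff_cauchyDuhamel hH.ne' hg₂ hh₂ hS hS', fun t ht x => ?_, cauchyDuhamel_zero_time,
    dt1_cauchyDuhamel_zero_time hH.ne' hS, fun e hge hhe t => ?_,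
    hasCompactSupport_cauchyDuhamel hg_supp hh_supp hρ⟩
  · have linear := cauchyDuhamel_equation hH.ne' hg₂ hh₂ hS hS' t x
    simp only [add_sub_cancel_left] at linear
    rw [show u t x = cauchyDuhamel H g h _ t x from hu.eq_of_nonneg ht x, massResidual] at linear
    linear_combination linear
  · ext x
    have source_comp := hu.source_comp_isometry hH hsource.fderiv.continuous hu'.continuous
      hu_bound hf hf_slope hg₂ hh₂ hge hhe
    simp only [Function.comp_apply, cauchyDuhamel, dataExtension, ← duhamel_comp_isometry,
      Function.comp_def, source_comp]
    rw [← Function.comp_apply (f := g), hge, ← Function.comp_apply (f := h), hhe]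

theorem exists_isGlobalSolution_of_small_slope (hH : 0 < H) (hg : ContDiff ℝ 4 g)
    (hg_supp : HasCompactSupport g) (hh : ContDiff ℝ 4 h) (hh_supp : HasCompactSupport h) (B : ℝ) :
    ∃ C, ∀ f : ℝ → ℝ, ContDiff ℝ 2 f → f 0 = 0 → (∀ v, |deriv f v| ≤ H ^ 2 / 2) →
      (∀ v, |deriv (deriv f) v| ≤ B) → ∃ φ, IsGlobalSolution H f g h φ ∧
        ∀ t, 0 ≤ t → ∀ x, |lap (φ t) x| ≤ C * Real.exp (H / 2 * t) := by
  obtain ⟨c, hc⟩ := exists_spatialC2Bound_dataExtension hH (hg.of_le (by norm_num)) hg_supp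
    (hh.of_le (by norm_num)) hh_supp
  obtain ⟨d, _, _, hd⟩ := exists_spatialC2Bound_dataSource hH hg hg_supp hh hh_supp
  let m := max c d
  refine ⟨3 * mildBound H (2 * (H / 4)) (8 / 9) m (m + B * mildBound H (H / 4) (8 / 9) m m ^ 2),
    fun f hf hf0 hf_slope hf_B => ?_⟩
  have hf'' : Continuous fun v => -deriv (deriv f) v :=
    (hf.deriv'.continuous_deriv le_rfl).neg
  obtain ⟨u, u', u'', hu', hu'', hu, hu_bound, hu''_bound⟩ := exists_isMildSolution_C2 hH
    (by positivity) (hc.mono (le_max_left c d)) (hd.mono (le_max_right c d))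
    (hasDerivAt_massResidual hf) (hasDerivAt_deriv_massResidual hf) hf''
    (by simp [massResidual, hf0]) (abs_deriv_massResidual_le hf_slope)
    (fun v => (norm_neg _).trans_le (hf_B v)) (slope_mul_duhamelGain_le hH) (by norm_num)
    (by norm_num)
  refine ⟨_, hu.isGlobalSolution_cauchyDuhamel hH hu' hu'' hu_bound hf hf0 hf_slope hg hg_supp hh
    hh_supp, fun t ht x => ?_⟩
  have φ_eq : cauchyDuhamel H g h _ t = u t := funext fun x => (hu.eq_of_nonneg ht x).symm
  rw [φ_eq, lap_eq_bilinearTrace (hu'.hasFDerivAt t) (hu''.hasFDerivAt t x), mul_assoc]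
  refine (norm_bilinearTrace_le (EuclideanSpace.basisFun (Fin 3) ℝ) (u'' t x)).trans ?_
  have hessian_bound := hu''_bound t ht x
  rw [show 2 * (H / 4) * t = H / 2 * t by ring] at hessian_bound
  simpa using hessian_bound

end SmallSlope

/-! ### Damped trajectories in a nonnegative potential -/

section DampedODE

/-- `y` solves the damped equation `y'' + γ y' + f(y) = p` for `t ≥ 0`, where both its Cauchy data
and its exponentially decaying forcing `p` have size `m`. -/
structure IsDampedTrajectory (γ κ m : ℝ) (f y : ℝ → ℝ) : Prop where
  contDiff : ContDiff ℝ 2 y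
  abs_initial_le : |y 0| ≤ m
  abs_initial_velocity_le : |deriv y 0| ≤ m
  abs_forcing_le : ∀ t, 0 ≤ t →
    |deriv (deriv y) t + γ * deriv y t + f (y t)| ≤ m * Real.exp (-κ * t)

lemma exists_crossing {y : ℝ → ℝ} {a b v w : ℝ} (hab : a ≤ b) (hy : Continuous y) (hv : y a ≤ v)
    (hvw : v ≤ w) (hw : w ≤ y b) :
    ∃ s t, a ≤ s ∧ s ≤ t ∧ y s = v ∧ y t = w ∧ ∀ r ∈ Icc s t, y r ∈ Icc v w := by
  obtain ⟨t, ⟨⟨hat, htb⟩, hyt⟩, ht_least⟩ := (isCompact_Icc.inter_right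
    (isClosed_singleton.preimage hy)).exists_isLeast
    (intermediate_value_Icc hab hy.continuousOn ⟨hv.trans hvw, hw⟩)
  obtain ⟨s, ⟨⟨has, hst⟩, hys⟩, hs_greatest⟩ := (isCompact_Icc.inter_right
    (isClosed_singleton.preimage hy)).exists_isGreatest
    (intermediate_value_Icc hat hy.continuousOn ⟨hv, hvw.trans_eq hyt.symm⟩)
  refine ⟨s, t, has, hst, hys, hyt, fun r hr => ⟨?_, ?_⟩⟩
  · by_contra! hlt
    obtain ⟨q, hq, hyq⟩ := intermediate_value_Icc hr.2 hy.continuousOn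
      ⟨hlt.le, hvw.trans_eq hyt.symm⟩
    have hqs := hs_greatest ⟨⟨(has.trans hr.1).trans hq.1, hq.2⟩, hyq⟩
    rw [show r = s by linarith [hr.1, hq.1], hys] at hlt
    exact hlt.false
  · by_contra! hlt
    obtain ⟨q, hq, hyq⟩ := intermediate_value_Icc (has.trans hr.1) hy.continuousOn
      ⟨hv.trans hvw, hlt.le⟩
    have htq := ht_least ⟨⟨hq.1, (hq.2.trans hr.2).trans htb⟩, hyq⟩
    rw [show r = t by linarith [hr.2, hq.2], hyt] at hlt
    exact hlt.false

variable {γ κ m E η b : ℝ} {f y : ℝ → ℝ}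

lemma hasDerivAt_pot (hf : Continuous f) (s : ℝ) : HasDerivAt (pot f) (f s) s :=
  (hf.integral_hasStrictDerivAt 0 s).hasDerivAt

lemma continuous_pot (hf : Continuous f) : Continuous (pot f) :=
  continuous_iff_continuousAt.2 fun s => (hasDerivAt_pot hf s).continuousAt

lemma pot_zero (f : ℝ → ℝ) : pot f 0 = 0 := intervalIntegral.integral_same

lemma pot_neg_comp_neg (f : ℝ → ℝ) (s : ℝ) : pot (fun σ => -f (-σ)) s = pot f (-s) := by
  rw [pot, intervalIntegral.integral_neg, intervalIntegral.integral_comp_neg, neg_zero,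
    intervalIntegral.integral_symm, neg_neg, pot]

namespace IsDampedTrajectory

lemma hasDerivAt (hy : IsDampedTrajectory γ κ m f y) (t : ℝ) : HasDerivAt y (deriv y t) t :=
  (hy.contDiff.differentiable two_ne_zero t).hasDerivAt

lemma hasDerivAt_deriv (hy : IsDampedTrajectory γ κ m f y) (t : ℝ) :
    HasDerivAt (deriv y) (deriv (deriv y) t) t :=
  (hy.contDiff.deriv'.differentiable one_ne_zero t).hasDerivAt

lemma nonneg (hy : IsDampedTrajectory γ κ m f y) : 0 ≤ m := (abs_nonneg _).trans hy.abs_initial_le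

lemma neg (hy : IsDampedTrajectory γ κ m f y) :
    IsDampedTrajectory γ κ m (fun s => -f (-s)) (fun t => -y t) where
  contDiff := hy.contDiff.neg
  abs_initial_le := by simpa using hy.abs_initial_le
  abs_initial_velocity_le := by simpa using hy.abs_initial_velocity_le
  abs_forcing_le t ht := by
    simp only [deriv.fun_neg', deriv.fun_neg, neg_neg, mul_neg, ← neg_add]
    simpa only [abs_neg] using hy.abs_forcing_le t ht

-- The work of the forcing is absorbed by the friction: `v p - γ v² ≤ p² / (4γ)`.
lemma energy_le (hy : IsDampedTrajectory γ κ m f y) (hγ : 0 < γ) (hκ : 0 < κ) (hf : Continuous f)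
    {t : ℝ} (ht : 0 ≤ t) :
    deriv y t ^ 2 / 2 + pot f (y t) ≤ m ^ 2 / 2 + pot f (y 0) + m ^ 2 / (8 * γ * κ) := by
  let A := m ^ 2 / (8 * γ * κ)
  have hW (t : ℝ) := ((((hy.hasDerivAt_deriv t).pow 2).div_const 2).add
    ((hasDerivAt_pot hf (y t)).comp t (hy.hasDerivAt t))).add
    ((hasDerivAt_exp_mul (-(2 * κ)) t).const_mul A)
  have hW_anti := antitoneOn_of_hasDerivWithinAt_nonpos (convex_Ici 0)
    (fun t _ => (hW t).continuousAt.continuousWithinAt) (fun t _ => (hW t).hasDerivWithinAt)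
    fun t ht => ?_
  · have decay := hW_anti self_mem_Ici ht ht
    have : 0 ≤ A * Real.exp (-(2 * κ) * t) := by positivity
    have : deriv y 0 ^ 2 ≤ m ^ 2 := sq_le_sq.2 (hy.abs_initial_velocity_le.trans (le_abs_self m))
    simp only [Pi.add_apply, Pi.pow_apply, Function.comp_apply, mul_zero, Real.exp_zero,
      mul_one] at decay
    linarith
  · have ht : 0 ≤ t := interior_subset ht
    set p := deriv (deriv y) t + γ * deriv y t + f (y t) with hp
    have forcing : p ^ 2 ≤ m ^ 2 * Real.exp (-(2 * κ) * t) := by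
      rw [show -(2 * κ) * t = (2 : ℕ) * (-κ * t) by push_cast; ring, Real.exp_nat_mul, ← mul_pow]
      exact sq_le_sq.2 ((hy.abs_forcing_le t ht).trans (le_abs_self _))
    have friction : deriv y t * (p - γ * deriv y t) ≤ p ^ 2 / (4 * γ) := by
      rw [le_div_iff₀ (by positivity)]
      nlinarith [sq_nonneg (p - 2 * γ * deriv y t)]
    have work : p ^ 2 / (4 * γ) ≤ m ^ 2 * Real.exp (-(2 * κ) * t) / (4 * γ) := by gcongr
    calc _ = deriv y t * (p - γ * deriv y t) - m ^ 2 * Real.exp (-(2 * κ) * t) / (4 * γ) := by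
          simp only [A, hp]
          field_simp
          ring
      _ ≤ 0 := by linarith

end IsDampedTrajectory

lemma eventually_energy_le (hγ : 0 < γ) (hκ : 0 < κ) (hf : Continuous f) (hE : 0 < E) :
    ∀ᶠ m in 𝓝 0, ∀ y, IsDampedTrajectory γ κ m f y →
      ∀ t, 0 ≤ t → deriv y t ^ 2 / 2 + pot f (y t) ≤ E := by
  obtain ⟨d, hd, pot_small⟩ : ∃ d > 0, ∀ s, |s| < d → pot f s < E / 2 := by
    have := (continuous_pot hf).tendsto' 0 0 (pot_zero f) |>.eventually_lt_const (half_pos hE)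
    simpa [Metric.eventually_nhds_iff] using this
  have data_small : ∀ᶠ m in 𝓝 0, m ^ 2 / 2 + m ^ 2 / (8 * γ * κ) < E / 2 :=
    ((by fun_prop : Continuous fun m : ℝ => m ^ 2 / 2 + m ^ 2 / (8 * γ * κ)).tendsto' 0 0
      (by simp)).eventually_lt_const (half_pos hE)
  filter_upwards [data_small, Iio_mem_nhds hd] with m hm hmd y hy t ht
  have := hy.energy_le hγ hκ hf ht
  have := pot_small (y 0) (hy.abs_initial_le.trans_lt hmd)
  linarith

lemma eventually_lt_of_pot_pos (hγ : 0 < γ) (hκ : 0 < κ) (hf : Continuous f) (hb : 0 < b)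
    (hFb : 0 < pot f b) :
    ∀ᶠ m in 𝓝 0, ∀ y, IsDampedTrajectory γ κ m f y → ∀ t, 0 ≤ t → y t < b := by
  filter_upwards [eventually_energy_le hγ hκ hf (half_pos hFb), Iio_mem_nhds hb]
    with m energy_le hmb y hy t ht
  by_contra! hbt
  obtain ⟨s, hs, hys⟩ := intermediate_value_Icc ht hy.contDiff.continuous.continuousOn
    ⟨((le_abs_self _).trans hy.abs_initial_le).trans hmb.le, hbt⟩
  have := energy_le y hy s hs.1
  rw [hys] at this
  linarith [sq_nonneg (deriv y s)]

lemma eq_zero_of_pot_eq_zero (hf : Continuous f) (hη : 0 < η)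
    (hF : ∀ s ∈ Icc 0 η, pot f s = 0) {s : ℝ} (hs : s ∈ Icc 0 η) : f s = 0 :=
  (uniqueDiffOn_Icc hη s hs).eq_deriv _ (hasDerivAt_pot hf s).hasDerivWithinAt
    ((hasDerivWithinAt_const s _ 0).congr hF (hF s hs))

lemma IsDampedTrajectory.deriv_add_mul_le (hy : IsDampedTrajectory γ κ m f y) (hκ : 0 < κ)
    {s t : ℝ} (hs : 0 ≤ s) (hst : s ≤ t) (hfy : ∀ r ∈ Icc s t, f (y r) = 0) :
    deriv y t + γ * y t ≤ deriv y s + γ * y s + m / κ := by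
  have hV (r : ℝ) := ((hy.hasDerivAt_deriv r).add ((hy.hasDerivAt r).const_mul γ)).add
    ((hasDerivAt_exp_mul (-κ) r).const_mul (m / κ))
  have hV_anti := antitoneOn_of_hasDerivWithinAt_nonpos (convex_Icc s t)
    (fun r _ => (hV r).continuousAt.continuousWithinAt) (fun r _ => (hV r).hasDerivWithinAt)
    fun r hr => ?_
  · have decay := hV_anti (left_mem_Icc.2 hst) (right_mem_Icc.2 hst) hst
    have hm := hy.nonneg
    have : 0 ≤ m / κ * Real.exp (-κ * t) := by positivity
    have : m / κ * Real.exp (-κ * s) ≤ m / κ :=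
      mul_le_of_le_one_right (by positivity) (Real.exp_le_one_iff.2 (by nlinarith))
    simp only [Pi.add_apply] at decay
    linarith
  · have hr := interior_subset hr
    have forcing := (le_abs_self _).trans (hy.abs_forcing_le r (hs.trans hr.1))
    rw [hfy r hr, add_zero] at forcing
    rw [show m / κ * (-κ * Real.exp (-κ * r)) = -(m * Real.exp (-κ * r)) by field_simp]
    linarith

-- Where the potential is flat, `y' + γ y` can only grow by the total forcing, while the energy
-- bounds `y'`; so `y` cannot travel from `η / 3` to `η`.
lemma eventually_lt_of_pot_eq_zero (hγ : 0 < γ) (hκ : 0 < κ) (hf : Continuous f) (hη : 0 < η)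
    (hF : ∀ s ∈ Icc 0 η, pot f s = 0) :
    ∀ᶠ m in 𝓝 0, ∀ y, IsDampedTrajectory γ κ m f y → ∀ t, 0 ≤ t → y t < η := by
  have forcing_small : ∀ᶠ m in 𝓝 0, m / κ < γ * η / 3 :=
    ((continuous_id.div_const κ).tendsto' 0 0 (by simp)).eventually_lt_const (by positivity)
  filter_upwards [forcing_small, Iio_mem_nhds (by positivity : 0 < η / 3),
    eventually_energy_le hγ hκ hf (by positivity : 0 < (γ * η / 6) ^ 2 / 2)]
    with m hmκ hmη energy_le y hy t ht
  by_contra! hηt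
  obtain ⟨r, s, hr, hrs, hyr, hys, between⟩ := exists_crossing ht hy.contDiff.continuous
    (((le_abs_self _).trans hy.abs_initial_le).trans hmη.le) (by linarith) hηt
  have in_flat (q : ℝ) (hq : q ∈ Icc r s) : y q ∈ Icc 0 η :=
    ⟨(by positivity : 0 ≤ η / 3).trans (between q hq).1, (between q hq).2⟩
  have speed (q : ℝ) (hq : q ∈ Icc r s) : |deriv y q| ≤ γ * η / 6 := by
    have := energy_le y hy q (hr.trans hq.1)
    rw [hF _ (in_flat q hq)] at this
    exact abs_le_of_sq_le_sq (by linarith) (by positivity)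
  have drift := hy.deriv_add_mul_le hκ hr hrs
    fun q hq => eq_zero_of_pot_eq_zero hf hη hF (in_flat q hq)
  rw [hyr, hys] at drift
  have := abs_le.1 (speed r (left_mem_Icc.2 hrs))
  have := abs_le.1 (speed s (right_mem_Icc.2 hrs))
  linarith

lemma eventually_lt_of_pot_nonneg (hγ : 0 < γ) (hκ : 0 < κ) (hf : Continuous f) (hη : 0 < η)
    (hF : ∀ s ∈ Icc 0 η, 0 ≤ pot f s) :
    ∀ᶠ m in 𝓝 0, ∀ y, IsDampedTrajectory γ κ m f y → ∀ t, 0 ≤ t → y t < η := by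
  by_cases hb : ∃ b ∈ Ioc 0 η, 0 < pot f b
  · obtain ⟨b, hb, hFb⟩ := hb
    filter_upwards [eventually_lt_of_pot_pos hγ hκ hf hb.1 hFb] with m hm y hy t ht
    exact (hm y hy t ht).trans_le hb.2
  · push Not at hb
    refine eventually_lt_of_pot_eq_zero hγ hκ hf hη fun s hs => ?_
    rcases hs.1.eq_or_lt with rfl | hs_pos
    exacts [pot_zero f, (hb s ⟨hs_pos, hs.2⟩).antisymm (hF s hs)]

theorem eventually_abs_lt_of_pot_nonneg (hγ : 0 < γ) (hκ : 0 < κ) (hf : Continuous f) (hη : 0 < η)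
    (hF : ∀ s, |s| ≤ η → 0 ≤ pot f s) :
    ∀ᶠ m in 𝓝 0, ∀ y, IsDampedTrajectory γ κ m f y → ∀ t, 0 ≤ t → |y t| < η := by
  have abs_le {s : ℝ} (hs : s ∈ Icc 0 η) : |s| ≤ η := (abs_of_nonneg hs.1).trans_le hs.2
  filter_upwards [eventually_lt_of_pot_nonneg hγ hκ hf hη fun s hs => hF s (abs_le hs),
    eventually_lt_of_pot_nonneg (f := fun s => -f (-s)) hγ hκ (by fun_prop) hη fun s hs => by
      rw [pot_neg_comp_neg]
      exact hF _ ((abs_neg s).trans_le (abs_le hs))]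
    with m above below y hy t ht
  exact abs_lt.2 ⟨neg_lt.1 (below _ hy.neg t ht), above y hy t ht⟩

end DampedODE

/-! ### Small data -/

section SmallData

variable {H : ℝ} {f k : ℝ → ℝ} {g h : E3 → ℝ} {φ : ℝ → E3 → ℝ} {ε η : ℝ}

lemma deriv_comp_mul_div (hε : ε ≠ 0) (f : ℝ → ℝ) :
    deriv (fun s => f (ε * s) / ε) = fun s => deriv f (ε * s) := by
  ext s
  rw [deriv_div_const, deriv_comp_mul_left, smul_eq_mul, mul_div_cancel_left₀ _ hε]

lemma contDiff_time (hφ : ContDiff ℝ 2 (Function.uncurry φ)) (x : E3) :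
    ContDiff ℝ 2 fun t => φ t x :=
  hφ.comp (contDiff_prodMk_left x)

lemma contDiff_space (hφ : ContDiff ℝ 2 (Function.uncurry φ)) (t : ℝ) : ContDiff ℝ 2 (φ t) :=
  hφ.comp (contDiff_prodMk_right t)

lemma dt1_const_mul (φ : ℝ → E3 → ℝ) (t : ℝ) (x : E3) :
    dt1 (fun t x => ε * φ t x) t x = ε * dt1 φ t x :=
  deriv_const_mul_field ε

lemma dt2_const_mul (φ : ℝ → E3 → ℝ) (t : ℝ) (x : E3) :
    dt2 (fun t x => ε * φ t x) t x = ε * dt2 φ t x := by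
  simp only [dt2, dt1_const_mul]
  exact deriv_const_mul_field ε

lemma IsGlobalSolution.const_mul (hε : ε ≠ 0)
    (hφ : IsGlobalSolution H (fun s => f (ε * s) / ε) g h φ) :
    IsGlobalSolution H f (fun x => ε * g x) (fun x => ε * h x) (fun t x => ε * φ t x) where
  contDiff := contDiff_const.mul hφ.contDiff
  equation t ht x := by
    rw [dt1_const_mul, dt2_const_mul, lap_const_mul ε (contDiff_space hφ.contDiff t)]
    have rescale : f (ε * φ t x) = ε * (f (ε * φ t x) / ε) := (mul_div_cancel₀ _ hε).symm
    rw [rescale]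
    linear_combination ε * hφ.equation t ht x
  initial x := by rw [hφ.initial]
  initial_velocity x := by rw [dt1_const_mul, hφ.initial_velocity]
  comp_isometry e hg hh t := by
    have cancel {u : E3 → ℝ} (hu : (fun x => ε * u x) ∘ e = fun x => ε * u x) : u ∘ e = u :=
      funext fun x => mul_left_cancel₀ hε (congrFun hu x)
    have φ_comp := hφ.comp_isometry e (cancel hg) (cancel hh) t
    exact funext fun x => congrArg (ε * ·) (congrFun φ_comp x)
  hasCompactSupport t := (hφ.hasCompactSupport t).mul_left

lemma exists_isGlobalSolution_const_mul (hH : 0 < H) (hg : ContDiff ℝ 4 g)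
    (hg_supp : HasCompactSupport g) (hh : ContDiff ℝ 4 h) (hh_supp : HasCompactSupport h)
    (hf : ContDiff ℝ 2 f) (hf0 : f 0 = 0) (hf_slope : ∀ v, |deriv f v| ≤ H ^ 2 / 2) {B : ℝ}
    (hf_B : ∀ v, |deriv (deriv f) v| ≤ B) :
    ∃ C, ∀ ε ∈ Ioc 0 1, ∃ φ, IsGlobalSolution H f (fun x => ε * g x) (fun x => ε * h x) φ ∧
      ∀ t, 0 ≤ t → ∀ x, |lap (φ t) x| ≤ C * ε * Real.exp (H / 2 * t) := by
  obtain ⟨C, hC⟩ := exists_isGlobalSolution_of_small_slope hH hg hg_supp hh hh_supp B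
  refine ⟨C, fun ε hε => ?_⟩
  have deriv_rescaled := deriv_comp_mul_div hε.1.ne' f
  obtain ⟨φ, hφ, hφ_lap⟩ := hC (fun s => f (ε * s) / ε) (by fun_prop) (by simp [hf0])
    (fun v => by simpa only [deriv_rescaled] using hf_slope (ε * v)) (fun v => by
      rw [deriv_rescaled, deriv_comp_mul_left, smul_eq_mul, abs_mul, abs_of_pos hε.1]
      exact (mul_le_of_le_one_left (abs_nonneg _) hε.2).trans (hf_B _))
  refine ⟨_, hφ.const_mul hε.1.ne', fun t ht x => ?_⟩
  rw [lap_const_mul ε (contDiff_space hφ.contDiff t), abs_mul, abs_of_pos hε.1]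
  linarith [mul_le_mul_of_nonneg_left (hφ_lap t ht x) hε.1.le]

lemma IsGlobalSolution.of_eqOn (hφ : IsGlobalSolution H k g h φ)
    (hkf : ∀ s, |s| ≤ η → k s = f s) (hφ_le : ∀ t, 0 ≤ t → ∀ x, |φ t x| ≤ η) :
    IsGlobalSolution H f g h φ :=
  { hφ with equation := fun t ht x => by rw [← hkf _ (hφ_le t ht x), hφ.equation t ht x] }

lemma IsGlobalSolution.isDampedTrajectory (hφ : IsGlobalSolution H f g h φ) {m : ℝ}
    (hg_le : ∀ x, |g x| ≤ m) (hh_le : ∀ x, |h x| ≤ m)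
    (hφ_lap : ∀ t, 0 ≤ t → ∀ x, |lap (φ t) x| ≤ m * Real.exp (H / 2 * t)) (x : E3) :
    IsDampedTrajectory (3 * H) (3 / 2 * H) m f fun t => φ t x where
  contDiff := contDiff_time hφ.contDiff x
  abs_initial_le := by simpa only [hφ.initial] using hg_le x
  abs_initial_velocity_le := (congrArg _ (hφ.initial_velocity x)).trans_le (hh_le x)
  abs_forcing_le t ht := by
    have equation : deriv (deriv fun t => φ t x) t + 3 * H * deriv (fun t => φ t x) t + f (φ t x) =
        Real.exp (-2 * H * t) * lap (φ t) x := by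
      change dt2 φ t x + 3 * H * dt1 φ t x + f (φ t x) = _
      linear_combination hφ.equation t ht x
    calc |deriv (deriv fun t => φ t x) t + 3 * H * deriv (fun t => φ t x) t + f (φ t x)|
        = Real.exp (-2 * H * t) * |lap (φ t) x| := by rw [equation, abs_mul, Real.abs_exp]
      _ ≤ Real.exp (-2 * H * t) * (m * Real.exp (H / 2 * t)) := by gcongr; exact hφ_lap t ht x
      _ = m * Real.exp (-(3 / 2 * H) * t) := by
        rw [mul_left_comm, ← Real.exp_add]
        ring_nf

lemma pot_congr (hkf : ∀ s, |s| ≤ η → k s = f s) {s : ℝ} (hs : |s| ≤ η) : pot k s = pot f s := by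
  refine intervalIntegral.integral_congr fun σ hσ => hkf σ ?_
  simpa using (abs_sub_left_of_mem_uIcc hσ).trans (by simpa using hs)

-- The derivative, rather than `f` itself, is cut off: this keeps the slope small.
lemma exists_truncation {c r R : ℝ} (hr : 0 < r) (hrR : r < R) (hf : ContDiff ℝ 2 f) (hf0 : f 0 = 0)
    (hf_slope : ∀ s, |s| < R → |deriv f s| ≤ c) :
    ∃ k, ContDiff ℝ 2 k ∧ k 0 = 0 ∧ (∀ s, |deriv k s| ≤ c) ∧ (∃ B, ∀ s, |deriv (deriv k) s| ≤ B) ∧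
      ∀ s, |s| ≤ r → k s = f s := by
  let b : ContDiffBump (0 : ℝ) := ⟨r, R, hr, hrR⟩
  have hf1 : ContDiff ℝ 1 (deriv f) := hf.deriv'
  have hb1 : ContDiff ℝ 1 fun s => deriv f s * b s := hf1.mul b.contDiff
  have hk (s : ℝ) := hasDerivAt_pot hb1.continuous s
  have hk_deriv : deriv (pot fun s => deriv f s * b s) = fun s => deriv f s * b s :=
    funext fun s => (hk s).deriv
  have slope (s : ℝ) : |deriv f s * b s| ≤ c := by
    rw [abs_mul, abs_of_nonneg b.nonneg]
    rcases lt_or_ge |s| R with hs | hs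
    · exact (mul_le_of_le_one_right (abs_nonneg _) b.le_one).trans (hf_slope s hs)
    · rw [b.zero_of_le_dist (by simpa using hs), mul_zero]
      exact (abs_nonneg _).trans (hf_slope 0 (by simpa using hr.trans hrR))
  refine ⟨pot fun s => deriv f s * b s, ?_, pot_zero _, by simpa only [hk_deriv] using slope,
    ?_, fun s hs => ?_⟩
  · refine contDiff_succ_iff_deriv (n := 1) |>.2 ⟨fun s => (hk s).differentiableAt, by simp, ?_⟩
    rwa [hk_deriv]
  · rw [hk_deriv]
    exact b.hasCompactSupport.mul_left.deriv.exists_bound_of_continuous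
      (hb1.continuous_deriv le_rfl)
  · calc pot (fun σ => deriv f σ * b σ) s = pot (deriv f) s :=
          pot_congr (fun σ hσ => by simp [b.one_of_mem_closedBall (by simpa using hσ)]) hs
      _ = f s := by
          rw [pot, intervalIntegral.integral_deriv_eq_sub
            (fun x _ => hf.differentiable two_ne_zero x) (hf1.continuous.intervalIntegrable _ _),
            hf0, sub_zero]

lemma eq_zero_of_eventually_pot_nonneg (hf : Continuous f) (hF : ∀ᶠ s in 𝓝 0, 0 ≤ pot f s) :
    f 0 = 0 := by
  have pot_min : IsLocalMin (pot f) 0 := by simpa only [IsLocalMin, IsMinFilter, pot_zero] using hF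
  exact pot_min.hasDerivAt_eq_zero (hasDerivAt_pot hf 0)

lemma eventually_exists_isGlobalSolution_of_small_slope (hH : 0 < H) (hg : ContDiff ℝ 4 g)
    (hg_supp : HasCompactSupport g) (hh : ContDiff ℝ 4 h) (hh_supp : HasCompactSupport h)
    (hf : ContDiff ℝ 2 f) (hf0 : f 0 = 0) (hf_slope : ∀ v, |deriv f v| ≤ H ^ 2 / 2) {B : ℝ}
    (hf_B : ∀ v, |deriv (deriv f) v| ≤ B) (hη : 0 < η) (hF : ∀ s, |s| ≤ η → 0 ≤ pot f s) :
    ∀ᶠ ε in 𝓝[>] 0, ∃ φ, IsGlobalSolution H f (fun x => ε * g x) (fun x => ε * h x) φ ∧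
      ∀ t, 0 ≤ t → ∀ x, |φ t x| ≤ η := by
  obtain ⟨C, hC⟩ := exists_isGlobalSolution_const_mul hH hg hg_supp hh hh_supp hf hf0 hf_slope hf_B
  obtain ⟨a, ha⟩ := hg_supp.exists_bound_of_continuous hg.continuous
  obtain ⟨b, hb⟩ := hh_supp.exists_bound_of_continuous hh.continuous
  let A := max C (max a b)
  have shrink : Tendsto (fun ε => A * ε) (𝓝[>] 0) (𝓝 0) :=
    ((continuous_const_mul A).tendsto' 0 0 (mul_zero A)).mono_left nhdsWithin_le_nhds
  filter_upwards [Ioc_mem_nhdsGT one_pos, shrink.eventually (eventually_abs_lt_of_pot_nonneg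
    (γ := 3 * H) (κ := 3 / 2 * H) (by positivity) (by positivity) hf.continuous hη hF)]
    with ε hε barrier
  obtain ⟨φ, hφ, hφ_lap⟩ := hC ε hε
  have data_le {u : E3 → ℝ} {c : ℝ} (hu : ∀ x, ‖u x‖ ≤ c) (hc : c ≤ A) (x : E3) :
      |ε * u x| ≤ A * ε := by
    rw [abs_mul, abs_of_pos hε.1, mul_comm]
    exact mul_le_mul_of_nonneg_right ((hu x).trans hc) hε.1.le
  have trajectory := hφ.isDampedTrajectory
    (data_le ha ((le_max_left a b).trans (le_max_right _ _)))
    (data_le hb ((le_max_right a b).trans (le_max_right _ _))) fun t ht x =>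
      (hφ_lap t ht x).trans (by have := hε.1.le; gcongr; exact le_max_left _ _)
  exact ⟨φ, hφ, fun t ht x => (barrier _ (trajectory x) t ht).le⟩

lemma exists_linearIsometryEquiv_apply_eq {E : Type*} [NormedAddCommGroup E]
    [InnerProductSpace ℝ E] {x y : E} (hxy : ‖x‖ = ‖y‖) : ∃ e : E ≃ₗᵢ[ℝ] E, e x = y :=
  ⟨(ℝ ∙ (x - y))ᗮ.reflection, Submodule.reflection_sub hxy⟩

lemma IsGlobalSolution.eq_of_norm_eq (hφ : IsGlobalSolution H f g h φ)
    (hg : ∀ x y, ‖x‖ = ‖y‖ → g x = g y) (hh : ∀ x y, ‖x‖ = ‖y‖ → h x = h y) (t : ℝ) (x y : E3)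
    (hxy : ‖x‖ = ‖y‖) : φ t x = φ t y := by
  obtain ⟨e, rfl⟩ := exists_linearIsometryEquiv_apply_eq hxy
  have φ_comp := hφ.comp_isometry e (funext fun z => hg _ _ (e.norm_map z))
    (funext fun z => hh _ _ (e.norm_map z)) t
  exact (congrFun φ_comp x).symm

theorem global_existence_deSitter_general (hH : 0 < H) (hf : ContDiff ℝ 2 f)
    (hF : ∀ᶠ s in 𝓝 0, 0 ≤ pot f s) (hf' : deriv f 0 = 0) (hg : ContDiff ℝ 4 g)
    (hg_supp : HasCompactSupport g) (hh : ContDiff ℝ 4 h) (hh_supp : HasCompactSupport h) :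
    ∀ᶠ ε in 𝓝[>] 0, ∃ φ, IsGlobalSolution H f (fun x => ε * g x) (fun x => ε * h x) φ := by
  have hf0 := eq_zero_of_eventually_pot_nonneg hf.continuous hF
  have slope : ∀ᶠ s in 𝓝 0, |deriv f s| < H ^ 2 / 2 :=
    ((hf.continuous_deriv one_le_two).abs.tendsto' 0 0 (by simp [hf'])).eventually_lt_const
      (by positivity)
  obtain ⟨R, hR, near_zero⟩ := Metric.eventually_nhds_iff.1 (hF.and slope)
  simp only [dist_zero_right, Real.norm_eq_abs] at near_zero
  obtain ⟨k, hk, hk0, hk_slope, ⟨B, hB⟩, hkf⟩ := exists_truncation (half_pos hR)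
    (half_lt_self hR) hf hf0 fun s hs => (near_zero hs).2.le
  filter_upwards [eventually_exists_isGlobalSolution_of_small_slope hH hg hg_supp hh hh_supp hk hk0
    hk_slope hB (half_pos hR) fun s hs => by
      rw [pot_congr hkf hs]
      exact (near_zero (hs.trans_lt (half_lt_self hR))).1] with ε ⟨φ, hφ, hφ_le⟩
  exact ⟨φ, hφ.of_eqOn hkf hφ_le⟩

end SmallData

/-- Global existence of radial, spatially compactly supported `C²` solutions
of the de Sitter Klein–Gordon equation `∂ₜ²φ + 3H ∂ₜφ - e^{-2Ht} Δφ + f(φ) = 0` for small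
multiples `(ε g, ε h)` of fixed radial `C₀^∞` initial data. -/
theorem global_existence_deSitter
    (H : ℝ) (hH : 0 < H)
    (f : ℝ → ℝ) (hf : ContDiff ℝ 2 f) (hf0 : f 0 = 0)
    (hFpos : ∀ s : ℝ, 0 ≤ pot f s)
    (δ M : ℝ) (hδ : 0 < δ) (hM : 0 < M)
    (hf' : ∀ s ∈ Set.Ioo (-δ) δ, |deriv f s| ≤ M * s ^ 2)
    (g h : E3 → ℝ)
    (hg : ContDiff ℝ (⊤ : ℕ∞) g) (hgsupp : HasCompactSupport g)
    (hh : ContDiff ℝ (⊤ : ℕ∞) h) (hhsupp : HasCompactSupport h)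
    (hgrad : ∀ x y : E3, ‖x‖ = ‖y‖ → g x = g y)
    (hhrad : ∀ x y : E3, ‖x‖ = ‖y‖ → h x = h y) :
    ∃ ε : ℝ, 0 < ε ∧ ∃ φ : ℝ → E3 → ℝ,
      ContDiff ℝ 2 (Function.uncurry φ) ∧
      (∀ t : ℝ, 0 ≤ t → ∀ x : E3,
        dt2 φ t x + 3 * H * dt1 φ t x - Real.exp (-2 * H * t) * lap (φ t) x + f (φ t x) = 0) ∧
      (∀ x : E3, φ 0 x = ε * g x) ∧
      (∀ x : E3, dt1 φ 0 x = ε * h x) ∧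
      (∀ t : ℝ, ∀ x y : E3, ‖x‖ = ‖y‖ → φ t x = φ t y) ∧
      (∀ t : ℝ, HasCompactSupport (φ t)) := by
  have hf'0 : deriv f 0 = 0 := by simpa using hf' 0 ⟨neg_lt_zero.2 hδ, hδ⟩
  have smooth : (4 : WithTop ℕ∞) ≤ (⊤ : ℕ∞) := WithTop.coe_le_coe.2 le_top
  obtain ⟨ε, ⟨φ, hφ⟩, hε⟩ := ((global_existence_deSitter_general hH hf (.of_forall hFpos) hf'0
    (hg.of_le smooth) hgsupp (hh.of_le smooth) hhsupp).and self_mem_nhdsWithin).exists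
  exact ⟨ε, hε, φ, hφ.contDiff, hφ.equation, hφ.initial, hφ.initial_velocity,
    hφ.eq_of_norm_eq (fun x y hxy => by rw [hgrad x y hxy]) (fun x y hxy => by rw [hhrad x y hxy]),
    hφ.hasCompactSupport⟩

end
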